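/- arXiv:1304.5392 — 3 statements merged into one kernel-verified Lean document; each statement's English description precedes it below -/
import Mathlib

section
/- Let p and q be nonzero real numbers. The inequality (2/3)·(sin(x)/x)^p + (1/3)·(tan(x)/x)^p > 1 holds for every x ∈ (0, π/2) if and only if p > 0 or p ≤ −(ln 3 − ln 2)/(ln π − ln 2); and the inequality (2/3)·(sin(x)/x)^q + (1/3)·(tan(x)/x)^q < 1 holds for every x ∈ (0, π/2) if and only if −4/5 ≤ q < 0. -/
open Real Set

/-!
Let `W_p` be the sum in the theorem. For `r > 0`, `log W_{-r}` extends continuously to `[0, π / 2]`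
with value `0` at `0`. Up to positive factors, its derivative is a function `F₁` vanishing at `0`,
the derivative of `F₁` is a function `F₂` vanishing at `0`, and that of `F₂` is `-F₃`, where
`F₃ 0 = 4 - 5 * r`.

* For `r = 4 / 5`, `F₂` is a negative multiple of a square, so `W_{-4/5} < 1`.
* For `r > 4 / 5`, `-F₃`, `F₂`, `F₁` and `log W_{-r}` are successively positive near `0`.
* For `0 < r < 1`, `F₃` increases and then decreases, so `F₂`, and then `F₁`, changes sign
  at most once, from positive to negative: `log W_{-r}` is positive on `(0, π / 2)` as soon as its
  value at `π / 2` is nonnegative, which is also necessary.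

The remaining exponents follow by comparing power means of different exponents.
-/

open Filter Topology

section PowerMeans

variable {a b v w : ℝ}

lemma rpow_mean_rpow_le (ha : 0 ≤ a) (hb : 0 ≤ b) (hv : 0 ≤ v) (hw : 0 ≤ w) (hvw : v + w = 1)
    {s t : ℝ} (hs : s ≠ 0) (hst : 1 ≤ t / s) :
    (v * a ^ s + w * b ^ s) ^ (t / s) ≤ v * a ^ t + w * b ^ t := by
  have jensen := (convexOn_rpow hst).2 (rpow_nonneg ha s) (rpow_nonneg hb s) hv hw hvw
  simpa only [smul_eq_mul, ← rpow_mul ha, ← rpow_mul hb, mul_div_cancel₀ t hs] using jensen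

lemma geom_mean_rpow_le (ha : 0 ≤ a) (hb : 0 ≤ b) (hv : 0 ≤ v) (hw : 0 ≤ w) (hvw : v + w = 1)
    (t : ℝ) : (a ^ v * b ^ w) ^ t ≤ v * a ^ t + w * b ^ t := by
  calc (a ^ v * b ^ w) ^ t = (a ^ t) ^ v * (b ^ t) ^ w := by
        rw [mul_rpow (by positivity) (by positivity), ← rpow_mul ha, ← rpow_mul hb,
          ← rpow_mul ha, ← rpow_mul hb, mul_comm v, mul_comm w]
    _ ≤ v * a ^ t + w * b ^ t :=
        geom_mean_le_arith_mean2_weighted hv hw (by positivity) (by positivity) hvw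

end PowerMeans

section DerivSign

/-- On `s`, the function `f` is differentiable and its derivative is a positive multiple of `g`,
so that `g` carries the sign of the derivative. The factor may depend on the point. -/
def DerivSignOn (f g : ℝ → ℝ) (s : Set ℝ) : Prop :=
  ∀ x ∈ s, ∃ k > 0, HasDerivAt f (k * g x) x

/-- `g` changes sign at most once on `s`, from positive to negative, and has at most one zero. -/
def SignDropsOn (g : ℝ → ℝ) (s : Set ℝ) : Prop :=
  ∀ x ∈ s, ∀ y ∈ s, x < y → g x ≤ 0 → g y < 0

variable {f g : ℝ → ℝ} {a b x : ℝ}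

lemma SignDropsOn.of_strictAntiOn {s : Set ℝ} (hg : StrictAntiOn g s) : SignDropsOn g s :=
  fun _ hx _ hy hxy hgx => (hg hx hy hxy).trans_le hgx

lemma DerivSignOn.mono {s t : Set ℝ} (h : DerivSignOn f g t) (hst : s ⊆ t) : DerivSignOn f g s :=
  fun x hx => h x (hst hx)

lemma DerivSignOn.exists_sub_eq (h : DerivSignOn f g (Ioo a b)) (hf : ContinuousOn f (Icc a b))
    (hab : a < b) : ∃ c ∈ Ioo a b, ∃ k > 0, f b - f a = k * g c := by
  obtain ⟨c, hc, hslope⟩ := exists_deriv_eq_slope f hab hf fun x hx =>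
    let ⟨_, _, hx'⟩ := h x hx
    hx'.differentiableAt.differentiableWithinAt
  obtain ⟨k, hk, hderiv⟩ := h c hc
  have hba : 0 < b - a := sub_pos.2 hab
  refine ⟨c, hc, k * (b - a), by positivity, ?_⟩
  rw [hderiv.deriv, eq_div_iff hba.ne'] at hslope
  rw [← hslope]
  ring

lemma DerivSignOn.exists_nonneg (h : DerivSignOn f g (Ioo a b)) (hf : ContinuousOn f (Icc a b))
    (hab : a < b) (hle : f a ≤ f b) : ∃ c ∈ Ioo a b, 0 ≤ g c := by
  obtain ⟨c, hc, k, hk, heq⟩ := h.exists_sub_eq hf hab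
  exact ⟨c, hc, nonneg_of_mul_nonneg_right (heq ▸ sub_nonneg.2 hle) hk⟩

lemma DerivSignOn.exists_nonpos (h : DerivSignOn f g (Ioo a b)) (hf : ContinuousOn f (Icc a b))
    (hab : a < b) (hle : f b ≤ f a) : ∃ c ∈ Ioo a b, g c ≤ 0 := by
  obtain ⟨c, hc, k, hk, heq⟩ := h.exists_sub_eq hf hab
  exact ⟨c, hc, by_contra fun hpos => (sub_nonpos.2 hle).not_gt <|
    heq ▸ mul_pos hk (not_le.1 hpos)⟩

lemma DerivSignOn.lt_of_neg (h : DerivSignOn f g (Ioo a b)) (hf : ContinuousOn f (Icc a b))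
    (hab : a < b) (hg : ∀ c ∈ Ioo a b, g c < 0) : f b < f a := by
  by_contra! hle
  obtain ⟨c, hc, hgc⟩ := h.exists_nonneg hf hab hle
  exact (hg c hc).not_ge hgc

lemma DerivSignOn.lt_of_le_left (h : DerivSignOn f g (Ioo a b)) (hf : ContinuousOn f (Icc a b))
    (hg : SignDropsOn g (Ioo a b)) (hx : x ∈ Ioo a b) (hle : f x ≤ f a) : f b < f x := by
  obtain ⟨c, hc, hgc⟩ := (h.mono (Ioo_subset_Ioo_right hx.2.le)).exists_nonpos
    (hf.mono (Icc_subset_Icc_right hx.2.le)) hx.1 hle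
  refine (h.mono (Ioo_subset_Ioo_left hx.1.le)).lt_of_neg
    (hf.mono (Icc_subset_Icc_left hx.1.le)) hx.2 fun d hd => ?_
  exact hg c ⟨hc.1, hc.2.trans hx.2⟩ d ⟨hx.1.trans hd.1, hd.2⟩ (hc.2.trans hd.1) hgc

lemma DerivSignOn.signDropsOn (h : DerivSignOn f g (Ioo a b)) (hf : ContinuousOn f (Ico a b))
    (hg : SignDropsOn g (Ioo a b)) (ha : f a = 0) : SignDropsOn f (Ioo a b) := by
  intro x hx y hy hxy hle
  have hsub : Ioo a y ⊆ Ioo a b := Ioo_subset_Ioo_right hy.2.le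
  refine ((h.mono hsub).lt_of_le_left (hf.mono (Icc_subset_Ico_right hy.2)) ?_ ⟨hx.1, hxy⟩
    (hle.trans_eq ha.symm)).trans_le hle
  exact fun c hc d hd => hg c (hsub hc) d (hsub hd)

lemma DerivSignOn.eventually_pos (h : DerivSignOn f g (Ioo a b)) (hf : ContinuousOn f (Ico a b))
    (hab : a < b) (ha : f a = 0) (hg : ∀ᶠ x in 𝓝[>] a, 0 < g x) : ∀ᶠ x in 𝓝[>] a, 0 < f x := by
  obtain ⟨u, hau, hu⟩ := mem_nhdsGT_iff_exists_Ioo_subset.1 hg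
  filter_upwards [Ioo_mem_nhdsGT hab, Ioo_mem_nhdsGT hau] with x hxb hxu
  by_contra! hle
  obtain ⟨c, hc, hgc⟩ := (h.mono (Ioo_subset_Ioo_right hxb.2.le)).exists_nonpos
    (hf.mono (Icc_subset_Ico_right hxb.2)) hxb.1 (hle.trans_eq ha.symm)
  exact hgc.not_gt (hu ⟨hc.1, hc.2.trans hxu.2⟩)

end DerivSign

section SignFactors

variable {r x : ℝ}

/-- The weighted power sum `W_p`. -/
noncomputable def huygensSum (p x : ℝ) : ℝ :=
  2 / 3 * (sin x / x) ^ p + 1 / 3 * (tan x / x) ^ p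

/-- The continuous extension of `log W_{-r}` to `[0, π / 2]`, for `r > 0`. -/
noncomputable def huygensLog (r x : ℝ) : ℝ :=
  log (2 + cos x ^ r) - log 3 - r * log (sinc x)

/-- The function `F₁` carrying the sign of the derivative of `huygensLog r`. -/
noncomputable def signFactor₁ (r x : ℝ) : ℝ :=
  sin x * cos x * (2 + cos x ^ r) / (cos x ^ r + 2 * cos x ^ 2) - x

/-- The function `F₂` carrying the sign of the derivative of `signFactor₁ r`. -/
noncomputable def signFactor₂ (r x : ℝ) : ℝ :=
  2 * cos x ^ (2 - r) - cos x ^ r - r * cos x ^ 2 + r - 1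

/-- The function `F₃` carrying the sign of the derivative of `-signFactor₂ r`. -/
noncomputable def signFactor₃ (r x : ℝ) : ℝ :=
  2 * (2 - r) - r * cos x ^ (2 * r - 2) - 2 * r * cos x ^ r

lemma cos_pos_of_mem_Ico_zero_pi_div_two (hx : x ∈ Ico 0 (π / 2)) : 0 < cos x :=
  cos_pos_of_mem_Ioo ⟨by linarith [hx.1, pi_pos], hx.2⟩

lemma cos_pos_of_mem_Ioo_zero_pi_div_two (hx : x ∈ Ioo 0 (π / 2)) : 0 < cos x :=
  cos_pos_of_mem_Ico_zero_pi_div_two (Ioo_subset_Ico_self hx)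

lemma sin_pos_of_mem_Ioc_zero_pi_div_two (hx : x ∈ Ioc 0 (π / 2)) : 0 < sin x :=
  sin_pos_of_pos_of_lt_pi hx.1 (by linarith [hx.2, pi_pos])

lemma sin_pos_of_mem_Ioo_zero_pi_div_two (hx : x ∈ Ioo 0 (π / 2)) : 0 < sin x :=
  sin_pos_of_mem_Ioc_zero_pi_div_two (Ioo_subset_Ioc_self hx)

lemma hasDerivAt_cos_rpow (hx : cos x ≠ 0) (s : ℝ) :
    HasDerivAt (fun y => cos y ^ s) (-sin x * s * cos x ^ (s - 1)) x :=
  (hasDerivAt_cos x).rpow_const (Or.inl hx)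

lemma hasDerivAt_signFactor₃ (hx : 0 < cos x) (r : ℝ) :
    HasDerivAt (signFactor₃ r)
      (2 * r * sin x * cos x ^ (2 * r - 3) * (r * cos x ^ (2 - r) - (1 - r))) x := by
  refine ((((hasDerivAt_cos_rpow hx.ne' (2 * r - 2)).const_mul r).const_sub (2 * (2 - r))).sub
    ((hasDerivAt_cos_rpow hx.ne' r).const_mul (2 * r))).congr_deriv ?_
  have hexp : cos x ^ (2 * r - 3) * cos x ^ (2 - r) = cos x ^ (r - 1) := by
    rw [← rpow_add hx]; congr 1; ring
  rw [show 2 * r - 2 - 1 = 2 * r - 3 by ring]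
  linear_combination -2 * r ^ 2 * sin x * hexp

lemma hasDerivAt_signFactor₂ (hx : 0 < cos x) (r : ℝ) :
    HasDerivAt (signFactor₂ r) (sin x * cos x ^ (1 - r) * -signFactor₃ r x) x := by
  refine ((((((hasDerivAt_cos_rpow hx.ne' (2 - r)).const_mul 2).sub
    (hasDerivAt_cos_rpow hx.ne' r)).sub (((hasDerivAt_cos x).pow 2).const_mul r)).add_const
    r).sub_const 1).congr_deriv ?_
  have hexp₁ : cos x ^ (1 - r) * cos x ^ (2 * r - 2) = cos x ^ (r - 1) := by
    rw [← rpow_add hx]; congr 1; ring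
  have hexp₂ : cos x ^ (1 - r) * cos x ^ r = cos x := by
    rw [← rpow_add hx, sub_add_cancel, rpow_one]
  rw [signFactor₃, show 2 - r - 1 = 1 - r by ring]
  push_cast
  linear_combination -r * sin x * hexp₁ - 2 * r * sin x * hexp₂

lemma hasDerivAt_signFactor₁ (hx : 0 < cos x) (r : ℝ) :
    HasDerivAt (signFactor₁ r)
      (2 * sin x ^ 2 * cos x ^ r / (cos x ^ r + 2 * cos x ^ 2) ^ 2 * signFactor₂ r x) x := by
  have hden : cos x ^ r + 2 * cos x ^ 2 ≠ 0 := by positivity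
  have hrpow := hasDerivAt_cos_rpow hx.ne' r
  refine (((((hasDerivAt_sin x).mul (hasDerivAt_cos x)).mul (hrpow.const_add 2)).div
    (hrpow.add (((hasDerivAt_cos x).pow 2).const_mul 2)) hden).sub (hasDerivAt_id x)).congr_deriv ?_
  have hexp₁ : cos x ^ (r - 1) = cos x ^ r / cos x := rpow_sub_one hx.ne' r
  have hexp₂ : cos x ^ (2 - r) = cos x ^ 2 / cos x ^ r := by rw [rpow_sub hx, rpow_two]
  have hsin : sin x ^ 2 = 1 - cos x ^ 2 := sin_sq x
  simp only [signFactor₂, Pi.mul_apply, Pi.add_apply, Pi.pow_apply, hexp₁, hexp₂]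
  field_simp
  grind

lemma hasDerivAt_huygensLog (hx : x ∈ Ioo 0 (π / 2)) (r : ℝ) :
    HasDerivAt (huygensLog r)
      (r * (cos x ^ r + 2 * cos x ^ 2) / (x * sin x * cos x * (2 + cos x ^ r)) *
        signFactor₁ r x) x := by
  have hx₀ : 0 < x := hx.1
  have hcos := cos_pos_of_mem_Ioo_zero_pi_div_two hx
  have hsin := sin_pos_of_mem_Ioo_zero_pi_div_two hx
  have hsinc : sinc =ᶠ[𝓝 x] fun y => sin y / y := by
    filter_upwards [eventually_ne_nhds hx₀.ne'] with y hy using sinc_of_ne_zero hy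
  have hlogsinc := (((hasDerivAt_sin x).div (hasDerivAt_id x) hx₀.ne').congr_of_eventuallyEq
    hsinc).log (by rw [sinc_of_ne_zero hx₀.ne']; positivity)
  refine (((((hasDerivAt_cos_rpow hcos.ne' r).const_add 2).log (by positivity)).sub_const
    (log 3)).sub (hlogsinc.const_mul r)).congr_deriv ?_
  simp only [signFactor₁, id, sinc_of_ne_zero hx₀.ne', rpow_sub_one hcos.ne']
  have hsq : sin x ^ 2 = 1 - cos x ^ 2 := sin_sq x
  field_simp
  grind

lemma derivSignOn_signFactor₃ (hr : 0 < r) :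
    DerivSignOn (signFactor₃ r) (fun x => r * cos x ^ (2 - r) - (1 - r)) (Ioo 0 (π / 2)) := by
  intro x hx
  have hcos := cos_pos_of_mem_Ioo_zero_pi_div_two hx
  have hsin := sin_pos_of_mem_Ioo_zero_pi_div_two hx
  exact ⟨_, by positivity, hasDerivAt_signFactor₃ hcos r⟩

lemma derivSignOn_signFactor₂ (r : ℝ) :
    DerivSignOn (signFactor₂ r) (fun x => -signFactor₃ r x) (Ioo 0 (π / 2)) := by
  intro x hx
  have hcos := cos_pos_of_mem_Ioo_zero_pi_div_two hx
  have hsin := sin_pos_of_mem_Ioo_zero_pi_div_two hx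
  exact ⟨_, by positivity, hasDerivAt_signFactor₂ hcos r⟩

lemma derivSignOn_signFactor₁ (r : ℝ) :
    DerivSignOn (signFactor₁ r) (signFactor₂ r) (Ioo 0 (π / 2)) := by
  intro x hx
  have hcos := cos_pos_of_mem_Ioo_zero_pi_div_two hx
  have hsin := sin_pos_of_mem_Ioo_zero_pi_div_two hx
  exact ⟨_, by positivity, hasDerivAt_signFactor₁ hcos r⟩

lemma derivSignOn_huygensLog (hr : 0 < r) :
    DerivSignOn (huygensLog r) (signFactor₁ r) (Ioo 0 (π / 2)) := by
  intro x hx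
  have hx₀ : 0 < x := hx.1
  have hcos := cos_pos_of_mem_Ioo_zero_pi_div_two hx
  have hsin := sin_pos_of_mem_Ioo_zero_pi_div_two hx
  exact ⟨_, by positivity, hasDerivAt_huygensLog hx r⟩

lemma continuousOn_signFactor₂ (r : ℝ) : ContinuousOn (signFactor₂ r) (Ico 0 (π / 2)) :=
  fun _ hx => (hasDerivAt_signFactor₂
    (cos_pos_of_mem_Ico_zero_pi_div_two hx) r).continuousAt.continuousWithinAt

lemma continuous_signFactor₂ (hr : r ∈ Icc 0 2) : Continuous (signFactor₂ r) := by
  have hcos₁ : Continuous fun x => cos x ^ (2 - r) :=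
    continuous_cos.rpow_const fun _ => Or.inr (sub_nonneg.2 hr.2)
  have hcos₂ : Continuous fun x => cos x ^ r := continuous_cos.rpow_const fun _ => Or.inr hr.1
  unfold signFactor₂
  fun_prop

lemma continuousOn_signFactor₁ (r : ℝ) : ContinuousOn (signFactor₁ r) (Ico 0 (π / 2)) :=
  fun _ hx => (hasDerivAt_signFactor₁
    (cos_pos_of_mem_Ico_zero_pi_div_two hx) r).continuousAt.continuousWithinAt

lemma sinc_pos_of_mem_Icc_zero_pi_div_two (hx : x ∈ Icc 0 (π / 2)) : 0 < sinc x := by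
  rcases hx.1.eq_or_lt with rfl | hx₀
  · simp only [sinc_zero, zero_lt_one]
  · rw [sinc_of_ne_zero hx₀.ne']
    exact div_pos (sin_pos_of_mem_Ioc_zero_pi_div_two ⟨hx₀, hx.2⟩) hx₀

lemma continuousOn_huygensLog (hr : 0 ≤ r) : ContinuousOn (huygensLog r) (Icc 0 (π / 2)) := by
  have hcos : Continuous fun x => 2 + cos x ^ r :=
    continuous_const.add (continuous_cos.rpow_const fun _ => Or.inr hr)
  refine ((hcos.continuousOn.log fun x hx => ?_).sub continuousOn_const).sub
    (continuousOn_const.mul (continuous_sinc.continuousOn.log fun x hx =>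
      (sinc_pos_of_mem_Icc_zero_pi_div_two hx).ne'))
  have : 0 ≤ cos x := cos_nonneg_of_mem_Icc ⟨by linarith [hx.1, pi_pos], hx.2⟩
  positivity

lemma signFactor₃_zero (r : ℝ) : signFactor₃ r 0 = 4 - 5 * r := by
  simp only [signFactor₃, cos_zero, one_rpow]
  ring

lemma signFactor₂_zero (r : ℝ) : signFactor₂ r 0 = 0 := by
  simp only [signFactor₂, cos_zero, one_rpow]
  ring

lemma signFactor₁_zero (r : ℝ) : signFactor₁ r 0 = 0 := by
  simp only [signFactor₁, sin_zero, zero_mul, zero_div, sub_zero]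

lemma huygensLog_zero (r : ℝ) : huygensLog r 0 = 0 := by
  simp only [huygensLog, cos_zero, one_rpow, sinc_zero, log_one]
  norm_num

lemma signFactor₂_pi_div_two (hr : r ≠ 0) (hr₂ : r ≠ 2) : signFactor₂ r (π / 2) = r - 1 := by
  simp only [signFactor₂, cos_pi_div_two, zero_rpow hr, zero_rpow (sub_ne_zero.2 hr₂.symm)]
  ring

lemma huygensLog_pi_div_two (hr : r ≠ 0) :
    huygensLog r (π / 2) = r * (log π - log 2) - (log 3 - log 2) := by
  have hsinc : sinc (π / 2) = (π / 2)⁻¹ := by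
    rw [sinc_of_ne_zero (by positivity), sin_pi_div_two, one_div]
  rw [huygensLog, hsinc, log_inv, log_div pi_ne_zero two_ne_zero, cos_pi_div_two, zero_rpow hr]
  ring_nf

lemma signFactor₂_four_fifths_neg (hx : x ∈ Ioo 0 (π / 2)) : signFactor₂ (4 / 5) x < 0 := by
  have hcos := cos_pos_of_mem_Ioo_zero_pi_div_two hx
  have hcos_lt : cos x < 1 :=
    cos_zero ▸ cos_lt_cos_of_nonneg_of_le_pi_div_two le_rfl hx.2.le hx.1
  set u := cos x ^ (2 / 5 : ℝ)
  have : 0 < u := by positivity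
  have hu_lt : u < 1 := rpow_lt_one hcos.le hcos_lt (by norm_num)
  have hpow (n : ℕ) : cos x ^ (2 / 5 * n : ℝ) = u ^ n := rpow_mul_natCast hcos.le _ n
  have h₂ : cos x ^ (4 / 5 : ℝ) = u ^ 2 := by rw [← hpow]; norm_num
  have h₃ : cos x ^ (2 - 4 / 5 : ℝ) = u ^ 3 := by rw [← hpow]; norm_num
  have h₅ : cos x ^ 2 = u ^ 5 := by rw [← hpow, ← rpow_natCast]; norm_num
  calc signFactor₂ (4 / 5) x = -((1 - u) ^ 2 * (4 * u ^ 3 + 8 * u ^ 2 + 2 * u + 1) / 5) := by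
        rw [signFactor₂, h₂, h₃, h₅]; ring
    _ < 0 := neg_neg_of_pos (by have := sub_pos.2 hu_lt; positivity)

lemma strictAntiOn_derivSign_signFactor₃ (hr : r ∈ Ioo 0 2) :
    StrictAntiOn (fun x => r * cos x ^ (2 - r) - (1 - r)) (Ioo 0 (π / 2)) := by
  intro x hx y hy hxy
  have hcos := cos_lt_cos_of_nonneg_of_le_pi_div_two hx.1.le hy.2.le hxy
  have hcos_rpow := rpow_lt_rpow (cos_pos_of_mem_Ioo_zero_pi_div_two hy).le hcos (sub_pos.2 hr.2)
  exact sub_lt_sub_right (mul_lt_mul_of_pos_left hcos_rpow hr.1) _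

lemma signDropsOn_signFactor₂ (hr : r ∈ Ioo 0 1) :
    SignDropsOn (signFactor₂ r) (Ioo 0 (π / 2)) := by
  intro x hx y hy hxy hFx
  by_contra! hFy
  have hcont {a b : ℝ} : ContinuousOn (signFactor₂ r) (Icc a b) :=
    (continuous_signFactor₂ ⟨hr.1.le, by linarith [hr.2]⟩).continuousOn
  have hF₂ := derivSignOn_signFactor₂ r
  have hend : signFactor₂ r (π / 2) ≤ 0 := by
    rw [signFactor₂_pi_div_two hr.1.ne' (by linarith [hr.2])]
    linarith [hr.2]
  obtain ⟨c₁, hc₁, hF₃c₁⟩ := (hF₂.mono (Ioo_subset_Ioo_right hx.2.le)).exists_nonpos hcont hx.1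
    (hFx.trans_eq (signFactor₂_zero r).symm)
  obtain ⟨c₂, hc₂, hF₃c₂⟩ := (hF₂.mono (Ioo_subset_Ioo hx.1.le hy.2.le)).exists_nonneg hcont hxy
    (hFx.trans hFy)
  obtain ⟨c₃, hc₃, hF₃c₃⟩ := (hF₂.mono (Ioo_subset_Ioo_left hy.1.le)).exists_nonpos hcont hy.2
    (hend.trans hFy)
  have hsub : Icc c₁ c₃ ⊆ Ioo 0 (π / 2) := Icc_subset_Ioo hc₁.1 hc₃.2
  have hF₃ := ((derivSignOn_signFactor₃ hr.1).mono (Ioo_subset_Icc_self.trans hsub)).lt_of_le_left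
    (fun z hz => (hasDerivAt_signFactor₃ (cos_pos_of_mem_Ioo_zero_pi_div_two
      (hsub hz)) r).continuousAt.continuousWithinAt)
    (.of_strictAntiOn ((strictAntiOn_derivSign_signFactor₃ ⟨hr.1, by linarith [hr.2]⟩).mono
      (Ioo_subset_Icc_self.trans hsub)))
    ⟨hc₁.2.trans hc₂.1, hc₂.2.trans hc₃.1⟩ (by linarith)
  linarith

lemma huygensLog_pos (hr : r ∈ Ioo 0 1) (hend : 0 ≤ huygensLog r (π / 2))
    (hx : x ∈ Ioo 0 (π / 2)) : 0 < huygensLog r x := by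
  by_contra! hle
  have hF₁ : SignDropsOn (signFactor₁ r) (Ioo 0 (π / 2)) :=
    (derivSignOn_signFactor₁ r).signDropsOn (continuousOn_signFactor₁ r)
      (signDropsOn_signFactor₂ hr) (signFactor₁_zero r)
  have hlt := (derivSignOn_huygensLog hr.1).lt_of_le_left (continuousOn_huygensLog hr.1.le) hF₁ hx
    (hle.trans_eq (huygensLog_zero r).symm)
  linarith

lemma signFactor₁_four_fifths_neg (hx : x ∈ Ioo 0 (π / 2)) : signFactor₁ (4 / 5) x < 0 := by
  have hsub : Ioo 0 x ⊆ Ioo 0 (π / 2) := Ioo_subset_Ioo_right hx.2.le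
  rw [← signFactor₁_zero (4 / 5)]
  exact ((derivSignOn_signFactor₁ _).mono hsub).lt_of_neg
    ((continuousOn_signFactor₁ _).mono (Icc_subset_Ico_right hx.2)) hx.1
    fun c hc => signFactor₂_four_fifths_neg (hsub hc)

lemma huygensLog_four_fifths_neg (hx : x ∈ Ioo 0 (π / 2)) : huygensLog (4 / 5) x < 0 := by
  have hsub : Ioo 0 x ⊆ Ioo 0 (π / 2) := Ioo_subset_Ioo_right hx.2.le
  rw [← huygensLog_zero (4 / 5)]
  exact ((derivSignOn_huygensLog (by norm_num)).mono hsub).lt_of_neg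
    ((continuousOn_huygensLog (by norm_num)).mono (Icc_subset_Icc_right hx.2.le)) hx.1
    fun c hc => signFactor₁_four_fifths_neg (hsub hc)

lemma eventually_huygensLog_pos (hr : 4 / 5 < r) : ∀ᶠ x in 𝓝[>] 0, 0 < huygensLog r x := by
  have hr₀ : 0 < r := by linarith
  have hpi : 0 < π / 2 := by positivity
  have hF₃ : ∀ᶠ x in 𝓝[>] 0, 0 < -signFactor₃ r x := by
    have hcont : ContinuousAt (fun x => -signFactor₃ r x) 0 :=
      (hasDerivAt_signFactor₃ (cos_zero ▸ one_pos) r).continuousAt.neg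
    have hpos : 0 < -signFactor₃ r 0 := by
      rw [signFactor₃_zero]
      linarith
    exact (hcont.eventually_const_lt hpos).filter_mono nhdsWithin_le_nhds
  have hF₂ := (derivSignOn_signFactor₂ r).eventually_pos (continuousOn_signFactor₂ r) hpi
    (signFactor₂_zero r) hF₃
  have hF₁ := (derivSignOn_signFactor₁ r).eventually_pos (continuousOn_signFactor₁ r) hpi
    (signFactor₁_zero r) hF₂
  exact (derivSignOn_huygensLog hr₀).eventually_pos
    ((continuousOn_huygensLog hr₀.le).mono Ico_subset_Icc_self) hpi (huygensLog_zero r) hF₁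

end SignFactors

section HuygensSum

variable {p q r s t x : ℝ}

lemma sin_div_self_pos (hx : x ∈ Ioo 0 (π / 2)) : 0 < sin x / x :=
  div_pos (sin_pos_of_mem_Ioo_zero_pi_div_two hx) hx.1

lemma tan_div_self_pos (hx : x ∈ Ioo 0 (π / 2)) : 0 < tan x / x :=
  div_pos (tan_pos_of_pos_of_lt_pi_div_two hx.1 hx.2) hx.1

lemma huygensSum_neg (hx : x ∈ Ioo 0 (π / 2)) (r : ℝ) :
    huygensSum (-r) x = exp (huygensLog r x) := by
  have hcos := cos_pos_of_mem_Ioo_zero_pi_div_two hx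
  have hsin := sin_div_self_pos hx
  have htan : tan x / x = sin x / x * (cos x)⁻¹ := by rw [tan_eq_sin_div_cos]; ring
  rw [huygensSum, htan, mul_rpow hsin.le (by positivity), inv_rpow hcos.le, ← rpow_neg hcos.le,
    neg_neg, huygensLog, exp_sub, exp_sub, exp_log (by positivity), exp_log three_pos,
    sinc_of_ne_zero hx.1.ne', mul_comm r, exp_mul, exp_log hsin, rpow_neg hsin.le]
  ring

lemma huygensSum_rpow_le (hx : x ∈ Ioo 0 (π / 2)) (hs : s ≠ 0) (hst : 1 ≤ t / s) :
    huygensSum s x ^ (t / s) ≤ huygensSum t x :=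
  rpow_mean_rpow_le (sin_div_self_pos hx).le (tan_div_self_pos hx).le (by norm_num) (by norm_num)
    (by norm_num) hs hst

lemma huygensSum_neg_four_fifths_lt_one (hx : x ∈ Ioo 0 (π / 2)) :
    huygensSum (-(4 / 5)) x < 1 := by
  rw [huygensSum_neg hx, exp_lt_one_iff]
  exact huygensLog_four_fifths_neg hx

lemma huygensSum_lt_one (hq : q ∈ Ico (-(4 / 5)) 0) (hx : x ∈ Ioo 0 (π / 2)) :
    huygensSum q x < 1 := by
  have hexp : 1 ≤ -(4 / 5) / q := (one_le_div_of_neg hq.2).2 hq.1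
  by_contra! hle
  exact ((one_le_rpow hle (zero_le_one.trans hexp)).trans
    (huygensSum_rpow_le hx hq.2.ne hexp)).not_gt (huygensSum_neg_four_fifths_lt_one hx)

lemma one_lt_huygensSum_of_pos (hp : 0 < p) (hx : x ∈ Ioo 0 (π / 2)) : 1 < huygensSum p x := by
  have hsin := sin_div_self_pos hx
  have htan := tan_div_self_pos hx
  set G := (sin x / x) ^ (2 / 3 : ℝ) * (tan x / x) ^ (1 / 3 : ℝ)
  have hG_le (t : ℝ) : G ^ t ≤ huygensSum t x :=
    geom_mean_rpow_le hsin.le htan.le (by norm_num) (by norm_num) (by norm_num) t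
  have hG : 1 < G := by
    by_contra! hle
    exact ((one_le_rpow_of_pos_of_le_one_of_nonpos (by positivity) hle (by norm_num)).trans
      (hG_le (-(4 / 5)))).not_gt (huygensSum_neg_four_fifths_lt_one hx)
  exact (one_lt_rpow hG hp).trans_le (hG_le p)

lemma neg_four_fifths_le_of_forall_huygensSum_lt_one
    (h : ∀ x ∈ Ioo 0 (π / 2), huygensSum q x < 1) : -(4 / 5) ≤ q := by
  by_contra! hq
  obtain ⟨x, hpos, hx⟩ := ((eventually_huygensLog_pos (lt_neg_of_lt_neg hq)).and
    (Ioo_mem_nhdsGT pi_div_two_pos)).exists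
  have hlt := h x hx
  rw [← neg_neg q, huygensSum_neg hx, exp_lt_one_iff] at hlt
  exact hlt.not_gt hpos

/-- The number `r` for which `W_{-r}` tends to `1` at `π / 2`. -/
noncomputable def huygensExponent : ℝ :=
  (log 3 - log 2) / (log π - log 2)

lemma log_pi_sub_log_two_pos : 0 < log π - log 2 :=
  sub_pos.2 (log_lt_log two_pos (by linarith [pi_gt_three]))

lemma huygensExponent_mem_Ioo : huygensExponent ∈ Ioo 0 1 := by
  have hlog₃ : log 2 < log 3 := log_lt_log two_pos (by norm_num)
  have hlogpi : log 3 < log π := log_lt_log three_pos pi_gt_three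
  exact ⟨div_pos (sub_pos.2 hlog₃) log_pi_sub_log_two_pos,
    (div_lt_one log_pi_sub_log_two_pos).2 (sub_lt_sub_right hlogpi _)⟩

lemma huygensLog_pi_div_two_nonneg_iff (hr : r ≠ 0) :
    0 ≤ huygensLog r (π / 2) ↔ huygensExponent ≤ r := by
  rw [huygensLog_pi_div_two hr, sub_nonneg, huygensExponent, div_le_iff₀ log_pi_sub_log_two_pos]

lemma one_lt_huygensSum_of_le_neg (hp : p ≤ -huygensExponent) (hx : x ∈ Ioo 0 (π / 2)) :
    1 < huygensSum p x := by
  obtain ⟨hpos, hlt⟩ := huygensExponent_mem_Ioo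
  have hexp : 1 ≤ p / -huygensExponent := (one_le_div_of_neg (neg_neg_of_pos hpos)).2 hp
  have hbase : 1 < huygensSum (-huygensExponent) x := by
    rw [huygensSum_neg hx, one_lt_exp_iff]
    exact huygensLog_pos ⟨hpos, hlt⟩ ((huygensLog_pi_div_two_nonneg_iff hpos.ne').2 le_rfl) hx
  exact (one_lt_rpow hbase (zero_lt_one.trans_le hexp)).trans_le
    (huygensSum_rpow_le hx (neg_ne_zero.2 hpos.ne') hexp)

lemma le_neg_huygensExponent_of_forall_one_lt (hp : p < 0)
    (h : ∀ x ∈ Ioo 0 (π / 2), 1 < huygensSum p x) : p ≤ -huygensExponent := by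
  have hr : 0 < -p := neg_pos.2 hp
  rw [le_neg, ← huygensLog_pi_div_two_nonneg_iff hr.ne']
  have hlim : Tendsto (huygensLog (-p)) (𝓝[<] (π / 2)) (𝓝 (huygensLog (-p) (π / 2))) := by
    rw [← nhdsWithin_Ioo_eq_nhdsLT pi_div_two_pos]
    exact (continuousOn_huygensLog hr.le _ (right_mem_Icc.2 pi_div_two_pos.le)).mono
      Ioo_subset_Icc_self
  refine ge_of_tendsto hlim ?_
  filter_upwards [Ioo_mem_nhdsLT pi_div_two_pos] with x hx
  have hlt := h x hx
  rw [← neg_neg p, huygensSum_neg hx, one_lt_exp_iff] at hlt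
  exact hlt.le

end HuygensSum

theorem huygens_trig (p q : ℝ) (hp : p ≠ 0) (hq : q ≠ 0) :
    ((∀ x ∈ Ioo (0 : ℝ) (π / 2),
        2 / 3 * (sin x / x) ^ p + 1 / 3 * (tan x / x) ^ p > 1) ↔
      (0 < p ∨ p ≤ -((Real.log 3 - Real.log 2) / (Real.log π - Real.log 2)))) ∧
    ((∀ x ∈ Ioo (0 : ℝ) (π / 2),
        2 / 3 * (sin x / x) ^ q + 1 / 3 * (tan x / x) ^ q < 1) ↔
      (-(4 / 5) ≤ q ∧ q < 0)) := by
  refine ⟨⟨fun h => ?_, ?_⟩, ⟨fun h => ⟨?_, ?_⟩, ?_⟩⟩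
  · exact hp.symm.lt_or_gt.imp_right fun hneg => le_neg_huygensExponent_of_forall_one_lt hneg h
  · rintro (hpos | hle) x hx
    · exact one_lt_huygensSum_of_pos hpos hx
    · exact one_lt_huygensSum_of_le_neg hle hx
  · exact neg_four_fifths_le_of_forall_huygensSum_lt_one h
  · have hx : π / 4 ∈ Ioo 0 (π / 2) := ⟨by positivity, by linarith [pi_pos]⟩
    exact hq.lt_or_gt.resolve_right fun hpos => (h _ hx).not_gt (one_lt_huygensSum_of_pos hpos hx)
  · rintro ⟨hge, hneg⟩ x hx
    exact huygensSum_lt_one ⟨hge, hneg⟩ hx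
end

section
/- Let p be a nonzero real number. The inequality (2/3)·(sinh(x)/x)^p + (1/3)·(tanh(x)/x)^p > 1 holds for every x ∈ (0, ∞) if and only if p > 0 or p ≤ −4/5. -/
open Real Set

/-!
Put `q = -p` and let `M c = ((2 + c ^ q) / 3) ^ (1 / q)` be the power mean of `1, 1, c`. Since
`tanh x / x = (sinh x / x) / cosh x`, the left-hand side of the inequality is exactly
`((sinh x / x) / M (cosh x)) ^ p`, so everything depends on how `F x = sinh x / M (cosh x)` compares
with `x`. Now `F 0 = 0`, and `F' x` is a function `G (cosh x)` of `cosh x` alone with `G 1 = 1`.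
Two applications of the mean value theorem give `F x - x` the sign of `G'` at some `c` between `1`
and `cosh x`, that is, the sign of
`N c = 2 * c ^ 2 - c ^ q - (c ^ q) ^ 2 - q * c ^ q * (c ^ 2 - 1)`.
On `c > 1` this is positive for `q < 0` and negative for `q ≥ 4 / 5`, while `N 1 = 0` and
`N' 1 = 4 - 5 * q`, so it is positive near `1` for `q < 4 / 5`.
-/

open scoped Topology

lemma exists_sign_sub_eq_sign_deriv {f f' : ℝ → ℝ} {a b : ℝ} (hab : a < b)
    (hfc : ContinuousOn f (Icc a b)) (hf : ∀ x ∈ Ioo a b, HasDerivAt f (f' x) x) :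
    ∃ ξ ∈ Ioo a b, SignType.sign (f b - f a) = SignType.sign (f' ξ) := by
  obtain ⟨ξ, hξ, hslope⟩ := exists_hasDerivAt_eq_slope f f' hab hfc hf
  refine ⟨ξ, hξ, ?_⟩
  rw [eq_div_iff (sub_pos.2 hab).ne'] at hslope
  rw [← hslope, sign_mul, sign_pos (sub_pos.2 hab), mul_one]

/-- The power mean of order `q` of the numbers `1` and `c`, with weights `2 / 3` and `1 / 3`.
It is only meaningful for `q ≠ 0`. -/
noncomputable def huygensMean (q c : ℝ) : ℝ := ((2 + c ^ q) / 3) ^ (1 / q)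

/-- The function `F` whose comparison with the identity decides the inequality of order `-q`. -/
noncomputable def huygensRatio (q x : ℝ) : ℝ := sinh x / huygensMean q (cosh x)

/-- The derivative `G` of `huygensRatio q`, as a function of `c = cosh x`. -/
noncomputable def huygensSlope (q c : ℝ) : ℝ :=
  (2 * c ^ 2 + c ^ q) / (c * (2 + c ^ q) * huygensMean q c)

/-- The factor `N` of the derivative of `huygensSlope q` that determines its sign. -/
noncomputable def huygensDiscr (q c : ℝ) : ℝ :=
  2 * c ^ 2 - c ^ q - (c ^ q) ^ 2 - q * c ^ q * (c ^ 2 - 1)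

section Mean

variable {p q c s x : ℝ}

lemma huygensMean_pos (hc : 0 < c) : 0 < huygensMean q c := by
  unfold huygensMean
  positivity

lemma huygensMean_one : huygensMean q 1 = 1 := by
  norm_num [huygensMean]

lemma huygensMean_neg_rpow (hp : p ≠ 0) (hc : 0 < c) :
    huygensMean (-p) c ^ p = ((2 + c ^ (-p)) / 3)⁻¹ := by
  rw [huygensMean, ← rpow_mul (by positivity), show 1 / -p * p = -1 by field_simp, rpow_neg_one]

lemma weighted_sum_rpow_eq (hp : p ≠ 0) (hs : 0 < s) (hc : 0 < c) :
    2 / 3 * s ^ p + 1 / 3 * (s / c) ^ p = (s / huygensMean (-p) c) ^ p := by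
  rw [div_rpow hs.le hc.le, div_rpow hs.le (huygensMean_pos hc).le, huygensMean_neg_rpow hp hc,
    rpow_neg hc.le]
  field_simp

lemma hasDerivAt_rpow_const_of_pos (hc : 0 < c) : HasDerivAt (· ^ q) (q * c ^ q / c) c := by
  convert hasDerivAt_rpow_const (p := q) (Or.inl hc.ne') using 1
  rw [rpow_sub_one hc.ne']
  ring

lemma hasDerivAt_huygensMean (hq : q ≠ 0) (hc : 0 < c) :
    HasDerivAt (huygensMean q) (huygensMean q c * c ^ q / (c * (2 + c ^ q))) c := by
  have hbase : 0 < (2 + c ^ q) / 3 := by positivity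
  refine HasDerivAt.congr_deriv (f := huygensMean q)
    ((((hasDerivAt_rpow_const_of_pos hc).const_add 2).div_const 3).rpow_const (Or.inl hbase.ne')) ?_
  rw [rpow_sub_one hbase.ne', ← huygensMean]
  field_simp

lemma hasDerivAt_huygensRatio (hq : q ≠ 0) (x : ℝ) :
    HasDerivAt (huygensRatio q) (huygensSlope q (cosh x)) x := by
  have hc := cosh_pos x
  have hM : 0 < huygensMean q (cosh x) := huygensMean_pos hc
  refine HasDerivAt.congr_deriv (f := huygensRatio q)
    ((hasDerivAt_sinh x).div ((hasDerivAt_huygensMean hq hc).comp x (hasDerivAt_cosh x)) hM.ne') ?_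
  rw [huygensSlope]
  field_simp
  rw [sinh_sq]
  ring

lemma hasDerivAt_huygensSlope (hq : q ≠ 0) (hc : 0 < c) :
    HasDerivAt (huygensSlope q)
      (huygensDiscr q c * (2 / (c ^ 2 * (2 + c ^ q) ^ 2 * huygensMean q c))) c := by
  have hM : 0 < huygensMean q c := huygensMean_pos hc
  have hpow := hasDerivAt_rpow_const_of_pos (q := q) hc
  have hden_ne : c * (2 + c ^ q) * huygensMean q c ≠ 0 := by positivity
  have hnum := ((hasDerivAt_pow 2 c).const_mul 2).add hpow
  have hden := ((hasDerivAt_id c).mul (hpow.const_add 2)).mul (hasDerivAt_huygensMean hq hc)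
  refine HasDerivAt.congr_deriv (f := huygensSlope q) (hnum.div hden hden_ne) ?_
  simp only [huygensDiscr, Pi.mul_apply, Pi.add_apply, id]
  field_simp
  ring

lemma huygensSlope_one : huygensSlope q 1 = 1 := by
  norm_num [huygensSlope, huygensMean_one]

lemma exists_sign_huygensSlope_sub_one (hq : q ≠ 0) (hc : 1 < c) :
    ∃ d ∈ Ioo 1 c,
      SignType.sign (huygensSlope q c - 1) = SignType.sign (huygensDiscr q d) := by
  have hderiv (y : ℝ) (hy : y ∈ Icc 1 c) :=
    hasDerivAt_huygensSlope hq (zero_lt_one.trans_le hy.1)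
  obtain ⟨d, hd, hsign⟩ := exists_sign_sub_eq_sign_deriv hc (HasDerivAt.continuousOn hderiv)
    (fun y hy ↦ hderiv y (Ioo_subset_Icc_self hy))
  have hd0 : 0 < d := zero_lt_one.trans hd.1
  have hM : 0 < huygensMean q d := huygensMean_pos hd0
  refine ⟨d, hd, ?_⟩
  rwa [huygensSlope_one, sign_mul, sign_pos (a := 2 / _) (by positivity), mul_one] at hsign

lemma exists_sign_huygensRatio_sub_self (hq : q ≠ 0) (hx : 0 < x) :
    ∃ c ∈ Ioo 1 (cosh x),
      SignType.sign (huygensRatio q x - x) = SignType.sign (huygensDiscr q c) := by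
  have hderiv (y : ℝ) := (hasDerivAt_huygensRatio hq y).sub (hasDerivAt_id y)
  obtain ⟨ξ, hξ, hratio⟩ := exists_sign_sub_eq_sign_deriv hx
    (HasDerivAt.continuousOn fun y _ ↦ hderiv y) (fun y _ ↦ hderiv y)
  obtain ⟨c, hc, hslope⟩ := exists_sign_huygensSlope_sub_one hq (one_lt_cosh.2 hξ.1.ne')
  have hcosh : cosh ξ < cosh x := cosh_strictMonoOn hξ.1.le hx.le hξ.2
  refine ⟨c, ⟨hc.1, hc.2.trans hcosh⟩, ?_⟩
  simpa [huygensRatio, hslope] using hratio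

lemma exists_sign_sinh_div_sub_huygensMean (hq : q ≠ 0) (hx : 0 < x) :
    ∃ c ∈ Ioo 1 (cosh x),
      SignType.sign (sinh x / x - huygensMean q (cosh x)) = SignType.sign (huygensDiscr q c) := by
  obtain ⟨c, hc, hsign⟩ := exists_sign_huygensRatio_sub_self hq hx
  have hM : 0 < huygensMean q (cosh x) := huygensMean_pos (cosh_pos x)
  have hfactor : huygensRatio q x - x =
      (sinh x / x - huygensMean q (cosh x)) * (x / huygensMean q (cosh x)) := by
    rw [huygensRatio]
    field_simp
  refine ⟨c, hc, ?_⟩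
  rwa [hfactor, sign_mul, sign_pos (div_pos hx hM), mul_one] at hsign

end Mean

section Discr

variable {q c t : ℝ}

lemma huygensDiscr_pos_of_neg (hq : q < 0) (hc : 1 < c) : 0 < huygensDiscr q c := by
  have hpow : 0 < c ^ q := by positivity
  have hpow_lt : c ^ q < 1 := rpow_lt_one_of_one_lt_of_neg hc hq
  have hsq : 0 < c ^ 2 - 1 := by nlinarith
  have hlast : 0 < -q * c ^ q * (c ^ 2 - 1) := mul_pos (mul_pos (neg_pos.2 hq) hpow) hsq
  unfold huygensDiscr
  nlinarith

lemma antitoneOn_huygensDiscr (hc : 1 ≤ c) :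
    AntitoneOn (fun q ↦ huygensDiscr q c) (Ici 0) := by
  intro q (_ : 0 ≤ q) r _ hqr
  have hpow : c ^ q ≤ c ^ r := rpow_le_rpow_of_exponent_le hc hqr
  have hsq : 0 ≤ c ^ 2 - 1 := sub_nonneg.2 (one_le_pow₀ hc)
  simp only [huygensDiscr]
  gcongr

lemma huygensDiscr_four_fifths_rpow (ht : 0 ≤ t) :
    huygensDiscr (4 / 5) (t ^ (5 / 2 : ℝ)) =
      -(t ^ 2 / 5 * (t - 1) ^ 2 * (4 * t ^ 3 + 8 * t ^ 2 + 2 * t + 1)) := by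
  have hsq : (t ^ (5 / 2 : ℝ)) ^ 2 = t ^ 5 := by
    rw [← rpow_mul_natCast ht, ← rpow_natCast]
    norm_num
  have hpow : (t ^ (5 / 2 : ℝ)) ^ (4 / 5 : ℝ) = t ^ 2 := by
    rw [← rpow_mul ht, ← rpow_natCast]
    norm_num
  rw [huygensDiscr, hsq, hpow]
  ring

lemma huygensDiscr_neg_of_four_fifths_le (hq : 4 / 5 ≤ q) (hc : 1 < c) :
    huygensDiscr q c < 0 := by
  have hc0 : 0 ≤ c := by linarith
  have ht : 1 < c ^ (2 / 5 : ℝ) := one_lt_rpow hc (by norm_num)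
  have hct : c = (c ^ (2 / 5 : ℝ)) ^ (5 / 2 : ℝ) := by
    rw [← rpow_mul hc0]
    norm_num
  calc huygensDiscr q c
      ≤ huygensDiscr (4 / 5) c :=
        antitoneOn_huygensDiscr hc.le (by norm_num) (by simp only [mem_Ici]; linarith) hq
    _ < 0 := by
        rw [hct, huygensDiscr_four_fifths_rpow (by positivity), neg_lt_zero]
        have := sub_pos.2 ht
        positivity

lemma huygensDiscr_one : huygensDiscr q 1 = 0 := by
  norm_num [huygensDiscr]

lemma hasDerivAt_huygensDiscr_one : HasDerivAt (huygensDiscr q) (4 - 5 * q) 1 := by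
  have hpow : HasDerivAt (fun c : ℝ ↦ c ^ q) q 1 := by
    simpa using hasDerivAt_rpow_const_of_pos (q := q) one_pos
  have hsq := hasDerivAt_pow 2 (1 : ℝ)
  refine HasDerivAt.congr_deriv (f := huygensDiscr q) ((((hsq.const_mul 2).sub hpow).sub
    (hpow.pow 2)).sub ((hpow.const_mul q).mul (hsq.sub_const 1))) ?_
  simp only [one_rpow, one_pow]
  push_cast
  ring

lemma eventually_huygensDiscr_pos (hq : q < 4 / 5) : ∀ᶠ c in 𝓝[>] 1, 0 < huygensDiscr q c := by
  have hderiv : 0 < deriv (huygensDiscr q) 1 := by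
    rw [hasDerivAt_huygensDiscr_one.deriv]
    linarith
  filter_upwards [self_mem_nhdsWithin, nhdsWithin_le_nhds
    (eventually_nhdsWithin_sign_eq_of_deriv_pos hderiv huygensDiscr_one)] with c hc hsign
  rwa [sign_pos (sub_pos.2 hc), sign_eq_one_iff] at hsign

end Discr

section Comparison

variable {q x : ℝ}

lemma huygensMean_cosh_lt_sinh_div_of_neg (hq : q < 0) (hx : 0 < x) :
    huygensMean q (cosh x) < sinh x / x := by
  obtain ⟨c, hc, hsign⟩ := exists_sign_sinh_div_sub_huygensMean hq.ne hx
  rwa [sign_pos (huygensDiscr_pos_of_neg hq hc.1), sign_eq_one_iff, sub_pos] at hsign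

lemma sinh_div_lt_huygensMean_cosh (hq : 4 / 5 ≤ q) (hx : 0 < x) :
    sinh x / x < huygensMean q (cosh x) := by
  obtain ⟨c, hc, hsign⟩ := exists_sign_sinh_div_sub_huygensMean (by linarith : 0 < q).ne' hx
  rwa [sign_neg (huygensDiscr_neg_of_four_fifths_le hq hc.1), sign_eq_neg_one_iff, sub_neg]
    at hsign

lemma eventually_huygensMean_cosh_lt_sinh_div (hq0 : q ≠ 0) (hq : q < 4 / 5) :
    ∀ᶠ x in 𝓝[>] 0, huygensMean q (cosh x) < sinh x / x := by
  obtain ⟨b, hb, hpos⟩ := mem_nhdsGT_iff_exists_Ioo_subset.1 (eventually_huygensDiscr_pos hq)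
  have hcosh : ∀ᶠ x in 𝓝 0, cosh x < b :=
    (continuous_cosh.tendsto' 0 1 cosh_zero).eventually_lt_const hb
  filter_upwards [self_mem_nhdsWithin, nhdsWithin_le_nhds hcosh] with x hx hxb
  obtain ⟨c, hc, hsign⟩ := exists_sign_sinh_div_sub_huygensMean hq0 hx
  have hdiscr : 0 < huygensDiscr q c := hpos ⟨hc.1, hc.2.trans hxb⟩
  rwa [sign_pos hdiscr, sign_eq_one_iff, sub_pos] at hsign

end Comparison

lemma huygens_sum_gt_one_iff {p x : ℝ} (hp : p ≠ 0) (hx : 0 < x) :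
    2 / 3 * (sinh x / x) ^ p + 1 / 3 * (tanh x / x) ^ p > 1 ↔
      huygensMean (-p) (cosh x) < sinh x / x ∧ 0 < p ∨
        sinh x / x < huygensMean (-p) (cosh x) ∧ p < 0 := by
  have hs : 0 < sinh x / x := div_pos (sinh_pos_iff.2 hx) hx
  have hM : 0 < huygensMean (-p) (cosh x) := huygensMean_pos (cosh_pos x)
  rw [tanh_eq_sinh_div_cosh, div_right_comm, weighted_sum_rpow_eq hp hs (cosh_pos x), gt_iff_lt,
    one_lt_rpow_iff_of_pos (div_pos hs hM), one_lt_div hM, div_lt_one hM]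

theorem huygens_hyp (p : ℝ) (hp : p ≠ 0) :
    (∀ x ∈ Ioi (0 : ℝ),
        2 / 3 * (sinh x / x) ^ p + 1 / 3 * (tanh x / x) ^ p > 1) ↔
      (0 < p ∨ p ≤ -(4 / 5)) := by
  constructor
  · intro h
    by_contra! hcon
    obtain ⟨hp_nonpos, hp_gt⟩ := hcon
    obtain ⟨x, hlt, hx⟩ := ((eventually_huygensMean_cosh_lt_sinh_div (neg_ne_zero.2 hp)
      (by linarith)).and self_mem_nhdsWithin).exists
    rcases (huygens_sum_gt_one_iff hp hx).1 (h x hx) with ⟨-, hp_pos⟩ | ⟨hgt, -⟩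
    · exact hp_nonpos.not_gt hp_pos
    · exact hlt.not_gt hgt
  · rintro (hp_pos | hp_le) x hx <;> rw [huygens_sum_gt_one_iff hp hx]
    · exact .inl ⟨huygensMean_cosh_lt_sinh_div_of_neg (neg_lt_zero.2 hp_pos) hx, hp_pos⟩
    · exact .inr ⟨sinh_div_lt_huygensMean_cosh (by linarith) hx, by linarith⟩
end

section
/- Let p and q be nonzero real numbers. The inequality (sin(x)/x)^(2p) + (tan(x)/x)^p > 2 holds for every x ∈ (0, π/2) if and only if p > 0 or p ≤ −(ln 2)/(2(ln π − ln 2)); and the inequality (sin(x)/x)^(2q) + (tan(x)/x)^q < 2 holds for every x ∈ (0, π/2) if and only if −3/5 ≤ q < 0. -/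
open Real Set
open scoped Topology

/-!
Put `s = -p`, `b = x * cot x` and `a = x ^ 2 + b ^ 2 = (x / sin x) ^ 2`, so that the sum in question
is `a ^ s + b ^ s`. As power means increase with the exponent, for `s > 0` the comparison with `2`
has to be settled only at the two critical exponents, `3 / 5` and the one where
`(π / 2) ^ (2 * s) = 2`; negative `s` reduces to `a * b < 1` by the AM-GM inequality.

At `s = 3 / 5` the power mean of `a` and `b` is at most a quadratic mean, and at `s = 3 / 4` it is
at least a Heron mean. Both bounds agree with the power mean to second order at `a = b`, which makes
them sharp enough for small `x`, and both are algebraic in `x` and `b`, so Taylor bounds for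
`x * cot x` finish. The Heron bound works on `(0, 3 / 2]`; near `π / 2` and at the larger critical
exponent, Bernoulli's inequality shows that `(x ^ 2) ^ s` drops below `2` at most linearly in
`π / 2 - x`, while `b ^ s` grows like a power less than one of it.

The exponents are optimal because of the limits at the ends of the interval: the sum tends to
`(π / 2) ^ (2 * s)` at `π / 2`, and is `2 + s * (s - 3 / 5) / 9 * x ^ 4 + ⋯` at `0`.
-/

theorem nonneg_of_hasDerivAt_nonneg {f f' : ℝ → ℝ} (hf : ∀ x, HasDerivAt f (f' x) x)
    (hf₀ : f 0 = 0) (hf' : ∀ x, 0 ≤ x → 0 ≤ f' x) {x : ℝ} (hx : 0 ≤ x) : 0 ≤ f x := by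
  have hmono : MonotoneOn f (Ici 0) :=
    monotoneOn_of_hasDerivWithinAt_nonneg (convex_Ici 0)
      (fun y _ ↦ (hf y).continuousAt.continuousWithinAt)
      (fun y _ ↦ (hf y).hasDerivWithinAt) (fun y hy ↦ hf' y (interior_subset hy))
  exact hf₀ ▸ hmono self_mem_Ici hx hx

/-- The Taylor polynomial of `cos` at `0` with `n` nonzero terms. -/
noncomputable def cosTaylor (n : ℕ) (x : ℝ) : ℝ :=
  ∑ k ∈ Finset.range n, (-1) ^ k * x ^ (2 * k) / (2 * k).factorial

/-- The Taylor polynomial of `sin` at `0` with `n` nonzero terms. -/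
noncomputable def sinTaylor (n : ℕ) (x : ℝ) : ℝ :=
  ∑ k ∈ Finset.range n, (-1) ^ k * x ^ (2 * k + 1) / (2 * k + 1).factorial

theorem hasDerivAt_sinTaylor (n : ℕ) (x : ℝ) : HasDerivAt (sinTaylor n) (cosTaylor n x) x := by
  refine HasDerivAt.fun_sum fun k _ ↦ ?_
  refine (((hasDerivAt_pow (2 * k + 1) x).const_mul ((-1) ^ k)).div_const _).congr_deriv ?_
  simp only [Nat.factorial_succ, Nat.cast_mul, add_tsub_cancel_right]
  field_simp

theorem cosTaylor_succ (n : ℕ) (x : ℝ) :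
    cosTaylor (n + 1) x = cosTaylor n x + (-1) ^ n * x ^ (2 * n) / (2 * n).factorial :=
  Finset.sum_range_succ ..

theorem sinTaylor_succ (n : ℕ) (x : ℝ) :
    sinTaylor (n + 1) x = sinTaylor n x + (-1) ^ n * x ^ (2 * n + 1) / (2 * n + 1).factorial :=
  Finset.sum_range_succ ..

theorem hasDerivAt_cosTaylor_succ (n : ℕ) (x : ℝ) :
    HasDerivAt (cosTaylor (n + 1)) (-sinTaylor n x) x := by
  induction n with
  | zero =>
    have hone : cosTaylor 1 = fun _ ↦ 1 := by ext; simp [cosTaylor]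
    simpa [hone, sinTaylor] using hasDerivAt_const x (1 : ℝ)
  | succ n ih =>
    rw [funext (cosTaylor_succ (n + 1)), sinTaylor_succ]
    refine (ih.add (((hasDerivAt_pow (2 * (n + 1)) x).const_mul ((-1) ^ (n + 1))).div_const
      _)).congr_deriv ?_
    rw [show 2 * (n + 1) = 2 * n + 1 + 1 by ring]
    simp only [Nat.factorial_succ, Nat.cast_mul, add_tsub_cancel_right]
    field_simp
    ring

theorem sin_sub_sinTaylor_nonneg_of_cos {n : ℕ}
    (h : ∀ x, 0 ≤ x → 0 ≤ (-1) ^ n * (cos x - cosTaylor n x)) {x : ℝ} (hx : 0 ≤ x) :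
    0 ≤ (-1) ^ n * (sin x - sinTaylor n x) :=
  nonneg_of_hasDerivAt_nonneg (f := fun y ↦ (-1) ^ n * (sin y - sinTaylor n y))
    (fun y ↦ ((hasDerivAt_sin y).sub (hasDerivAt_sinTaylor n y)).const_mul _)
    (by simp [sinTaylor]) h hx

theorem cos_sub_cosTaylor_succ_nonneg_of_sin {n : ℕ}
    (h : ∀ x, 0 ≤ x → 0 ≤ (-1) ^ n * (sin x - sinTaylor n x)) {x : ℝ} (hx : 0 ≤ x) :
    0 ≤ (-1) ^ (n + 1) * (cos x - cosTaylor (n + 1) x) :=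
  nonneg_of_hasDerivAt_nonneg (f := fun y ↦ (-1) ^ (n + 1) * (cos y - cosTaylor (n + 1) y))
    (fun y ↦ (((hasDerivAt_cos y).sub (hasDerivAt_cosTaylor_succ n y)).const_mul _).congr_deriv
      (by ring : _ = (-1) ^ n * (sin y - sinTaylor n y)))
    (by simp [cosTaylor, Finset.sum_range_succ']) h hx

theorem cos_sub_cosTaylor_nonneg {x : ℝ} (hx : 0 ≤ x) (n : ℕ) :
    0 ≤ (-1) ^ (n + 1) * (cos x - cosTaylor (n + 1) x) := by
  induction n generalizing x with
  | zero => simp [cosTaylor, cos_le_one]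
  | succ n ih =>
    exact cos_sub_cosTaylor_succ_nonneg_of_sin
      (fun y hy ↦ sin_sub_sinTaylor_nonneg_of_cos (fun z hz ↦ ih hz) hy) hx

theorem sin_sub_sinTaylor_nonneg {x : ℝ} (hx : 0 ≤ x) (n : ℕ) :
    0 ≤ (-1) ^ (n + 1) * (sin x - sinTaylor (n + 1) x) :=
  sin_sub_sinTaylor_nonneg_of_cos (fun _ hy ↦ cos_sub_cosTaylor_nonneg hy n) hx

/-- A polynomial in `t = x ^ 2` bounding `x * cot x = 1 - t / 3 - t ^ 2 / 45 - 2 * t ^ 3 / 945 - ⋯`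
from below for `x ≤ 3 / 2`. -/
noncomputable def mulCotLower (t : ℝ) : ℝ := 1 - t / 3 - t ^ 2 / 45 - t ^ 3 / 320

/-- A polynomial in `t = x ^ 2` bounding `x * cot x = 1 - t / 3 - t ^ 2 / 45 - 2 * t ^ 3 / 945 - ⋯`
from above for `x < π / 2`. -/
noncomputable def mulCotUpper (t : ℝ) : ℝ := 1 - t / 3 - t ^ 2 / 45 - t ^ 3 / 600

theorem mulCotLower_pos {t : ℝ} (ht₀ : 0 ≤ t) (ht : t ≤ 9 / 4) : 0 < mulCotLower t := by
  rw [mulCotLower]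
  linarith [pow_le_pow_left₀ ht₀ ht 2, pow_le_pow_left₀ ht₀ ht 3]

theorem mulCotUpper_pos {t : ℝ} (ht₀ : 0 ≤ t) (ht : t ≤ 5 / 2) : 0 < mulCotUpper t := by
  rw [mulCotUpper]
  linarith [pow_le_pow_left₀ ht₀ ht 2, pow_le_pow_left₀ ht₀ ht 3]

theorem mulCotLower_lt_mul_cot {x : ℝ} (hx₀ : 0 < x) (hx : x ≤ 3 / 2) :
    mulCotLower (x ^ 2) < x * cot x := by
  have hsin : 0 < sin x := sin_pos_of_pos_of_lt_pi hx₀ (by linarith [pi_gt_three])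
  have hcos_ge : 1 - x ^ 2 / 2 + x ^ 4 / 24 - x ^ 6 / 720 ≤ cos x := by
    have h := cos_sub_cosTaylor_nonneg hx₀.le 3
    norm_num [cosTaylor, Finset.sum_range_succ, Nat.factorial] at h
    linarith
  have hsin_le : sin x ≤ x - x ^ 3 / 6 + x ^ 5 / 120 := by
    have h := sin_sub_sinTaylor_nonneg hx₀.le 2
    norm_num [sinTaylor, Finset.sum_range_succ, Nat.factorial] at h
    linarith
  have hx₂ : x ^ 2 ≤ 9 / 4 := by nlinarith
  have hlower := mulCotLower_pos (sq_nonneg x) hx₂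
  rw [cot_eq_cos_div_sin, mul_div_assoc', lt_div_iff₀ hsin]
  calc mulCotLower (x ^ 2) * sin x ≤ mulCotLower (x ^ 2) * (x - x ^ 3 / 6 + x ^ 5 / 120) := by
        gcongr
    _ < x * (1 - x ^ 2 / 2 + x ^ 4 / 24 - x ^ 6 / 720) := by
        have hdiff : 0 < x ^ 7 * (7 / 8640 - 29 / 86400 * x ^ 2 + (x ^ 2) ^ 2 / 38400) := by
          have : 0 < 7 / 8640 - 29 / 86400 * x ^ 2 := by linarith
          positivity
        rw [mulCotLower]
        linarith
    _ ≤ x * cos x := by gcongr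

theorem mul_cot_lt_mulCotUpper {x : ℝ} (hx₀ : 0 < x) (hx : x < π / 2) :
    x * cot x < mulCotUpper (x ^ 2) := by
  have hsin : 0 < sin x := sin_pos_of_pos_of_lt_pi hx₀ (by linarith [pi_pos])
  have hcos_le : cos x ≤ 1 - x ^ 2 / 2 + x ^ 4 / 24 - x ^ 6 / 720 + x ^ 8 / 40320 := by
    have h := cos_sub_cosTaylor_nonneg hx₀.le 4
    norm_num [cosTaylor, Finset.sum_range_succ, Nat.factorial] at h
    linarith
  have hsin_ge : x - x ^ 3 / 6 + x ^ 5 / 120 - x ^ 7 / 5040 ≤ sin x := by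
    have h := sin_sub_sinTaylor_nonneg hx₀.le 3
    norm_num [sinTaylor, Finset.sum_range_succ, Nat.factorial] at h
    linarith
  have hx₂ : x ^ 2 ≤ 5 / 2 := by nlinarith [pi_lt_d4]
  have hupper := mulCotUpper_pos (sq_nonneg x) hx₂
  rw [cot_eq_cos_div_sin, mul_div_assoc', div_lt_iff₀ hsin]
  calc x * cos x ≤ x * (1 - x ^ 2 / 2 + x ^ 4 / 24 - x ^ 6 / 720 + x ^ 8 / 40320) := by gcongr
    _ < mulCotUpper (x ^ 2) * (x - x ^ 3 / 6 + x ^ 5 / 120 - x ^ 7 / 5040) := by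
        have hdiff : 0 < x ^ 7 * (17 / 37800 +
            x ^ 2 * (3 / 22400 - 43 / 4536000 * x ^ 2) + (x ^ 2) ^ 3 / 3024000) := by
          have : 0 < 3 / 22400 - 43 / 4536000 * x ^ 2 := by linarith
          positivity
        rw [mulCotUpper]
        linarith
    _ ≤ mulCotUpper (x ^ 2) * sin x := by gcongr

theorem convexOn_one_add_rpow_add_one_sub_rpow_sub_sq {r : ℝ} (hr : 3 ≤ r) :
    ConvexOn ℝ (Ioo (-1) 1)
      fun x : ℝ ↦ (1 + x) ^ r + (1 - x) ^ r - r * (r - 1) * x ^ 2 := by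
  have hadd (q : ℝ) {x : ℝ} (hx : x ∈ Ioo (-1 : ℝ) 1) :
      HasDerivAt (fun y : ℝ ↦ (1 + y) ^ q) (q * (1 + x) ^ (q - 1)) x := by
    simpa using ((hasDerivAt_id x).const_add 1).rpow_const (p := q)
      (Or.inl (by linarith [hx.1] : 1 + x ≠ 0))
  have hsub (q : ℝ) {x : ℝ} (hx : x ∈ Ioo (-1 : ℝ) 1) :
      HasDerivAt (fun y : ℝ ↦ (1 - y) ^ q) (-(q * (1 - x) ^ (q - 1))) x := by
    simpa using ((hasDerivAt_id x).const_sub 1).rpow_const (p := q)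
      (Or.inl (by linarith [hx.2] : 1 - x ≠ 0))
  have hderiv {x : ℝ} (hx : x ∈ Ioo (-1 : ℝ) 1) :=
    ((hadd r hx).add (hsub r hx)).sub ((hasDerivAt_pow 2 x).const_mul (r * (r - 1)))
  have hderiv₂ {x : ℝ} (hx : x ∈ Ioo (-1 : ℝ) 1) :=
    (((hadd (r - 1) hx).const_mul r).add (((hsub (r - 1) hx).const_mul r).neg)).sub
      ((hasDerivAt_id x).const_mul (2 * (r * (r - 1))))
  refine convexOn_of_hasDerivWithinAt2_nonneg (convex_Ioo _ _)
    (fun x hx ↦ (hderiv hx).continuousAt.continuousWithinAt)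
    (fun x hx ↦ ((hderiv (interior_subset hx)).congr_deriv ?_).hasDerivWithinAt)
    (fun x hx ↦ (hderiv₂ (interior_subset hx)).hasDerivWithinAt) fun x hx ↦ ?_
  · simp only [id_eq, Nat.cast_ofNat, Nat.add_one_sub_one, pow_one, Pi.add_apply,
      Pi.sub_apply, Pi.neg_apply]
    ring
  · rw [interior_Ioo] at hx
    have hadd_le := one_add_mul_self_le_rpow_one_add hx.1.le (by linarith : 1 ≤ r - 1 - 1)
    have hsub_le := one_add_mul_self_le_rpow_one_add (by linarith [hx.2] : -1 ≤ -x)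
      (by linarith : 1 ≤ r - 1 - 1)
    rw [← sub_eq_add_neg] at hsub_le
    have hr₀ : 0 ≤ r * (r - 1) := mul_nonneg (by linarith) (by linarith)
    linarith [mul_le_mul_of_nonneg_left (add_le_add hadd_le hsub_le) hr₀]

theorem two_add_le_one_add_rpow_add_one_sub_rpow {r h : ℝ} (hr : 3 ≤ r) (hh : |h| < 1) :
    2 + r * (r - 1) * h ^ 2 ≤ (1 + h) ^ r + (1 - h) ^ r := by
  rw [abs_lt] at hh
  have hmid := (convexOn_one_add_rpow_add_one_sub_rpow_sub_sq hr).2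
    (show h ∈ Ioo (-1 : ℝ) 1 from hh) (show -h ∈ Ioo (-1 : ℝ) 1 from ⟨by linarith, by linarith⟩)
    one_half_pos.le one_half_pos.le (by norm_num)
  norm_num [← sub_eq_add_neg] at hmid
  linarith

theorem one_le_one_add_rpow_quadratic {s h : ℝ} (hs₀ : 0 < s) (hs : s ≤ 2 / 3) (hh : |h| < 1) :
    1 ≤ s / 4 * ((1 + h) ^ (2 / s) + (1 - h) ^ (2 / s)) +
      (1 - s / 2) * ((1 + h) * (1 - h)) ^ (1 / s) := by
  have hsum := two_add_le_one_add_rpow_add_one_sub_rpow (r := 2 / s)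
    ((le_div_iff₀ hs₀).2 (by linarith)) hh
  have hprod : 1 + 1 / s * -h ^ 2 ≤ (1 + -h ^ 2) ^ (1 / s) :=
    one_add_mul_self_le_rpow_one_add (by nlinarith [sq_abs h, abs_nonneg h])
      ((le_div_iff₀ hs₀).2 (by linarith))
  have hs' : 0 ≤ 1 - s / 2 := by linarith
  calc 1 = s / 4 * (2 + 2 / s * (2 / s - 1) * h ^ 2) + (1 - s / 2) * (1 + 1 / s * -h ^ 2) := by
        field_simp; ring
    _ ≤ s / 4 * ((1 + h) ^ (2 / s) + (1 - h) ^ (2 / s)) +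
          (1 - s / 2) * (1 + -h ^ 2) ^ (1 / s) := by gcongr
    _ = _ := by ring_nf

theorem rpow_mean_le_quadratic {a b s : ℝ} (ha : 0 < a) (hb : 0 < b) (hs₀ : 0 < s)
    (hs : s ≤ 2 / 3) :
    ((a ^ s + b ^ s) / 2) ^ (2 / s) ≤ s / 4 * (a ^ 2 + b ^ 2) + (1 - s / 2) * (a * b) := by
  have ha' : 0 < a ^ s := rpow_pos_of_pos ha s
  have hb' : 0 < b ^ s := rpow_pos_of_pos hb s
  obtain ⟨m, hm⟩ : ∃ m, m = (a ^ s + b ^ s) / 2 := ⟨_, rfl⟩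
  obtain ⟨h, hh⟩ : ∃ h, h = (a ^ s - b ^ s) / (a ^ s + b ^ s) := ⟨_, rfl⟩
  have hm₀ : 0 < m := by linarith
  have ham : a ^ s = m * (1 + h) := by rw [hm, hh]; field_simp; ring
  have hbm : b ^ s = m * (1 - h) := by rw [hm, hh]; field_simp; ring
  have hadd : 0 < 1 + h := pos_of_mul_pos_right (ham ▸ ha') hm₀.le
  have hsub : 0 < 1 - h := pos_of_mul_pos_right (hbm ▸ hb') hm₀.le
  have hsq {y z : ℝ} (hy : 0 < y) (hz : 0 < z) (hyz : y ^ s = m * z) :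
      y ^ 2 = m ^ (2 / s) * z ^ (2 / s) := by
    rw [← mul_rpow hm₀.le hz.le, ← hyz, ← rpow_mul hy.le, mul_div_cancel₀ _ hs₀.ne', rpow_two]
  have hmul : a * b = m ^ (2 / s) * ((1 + h) * (1 - h)) ^ (1 / s) := by
    have hab : (a * b) ^ s = m ^ (2 : ℝ) * ((1 + h) * (1 - h)) := by
      rw [mul_rpow ha.le hb.le, ham, hbm, rpow_two]; ring
    rw [show 2 / s = 2 * (1 / s) by ring, rpow_mul hm₀.le, ← mul_rpow (by positivity)
      (by positivity), ← hab, ← rpow_mul (by positivity), mul_one_div_cancel hs₀.ne', rpow_one]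
  rw [← hm, hsq ha hadd ham, hsq hb hsub hbm, hmul]
  have hone := one_le_one_add_rpow_quadratic hs₀ hs (abs_lt.2 ⟨by linarith, by linarith⟩ : |h| < 1)
  calc m ^ (2 / s) ≤ m ^ (2 / s) * _ := le_mul_of_one_le_right (by positivity) hone
    _ = _ := by ring

theorem rpow_mean_le_of_le {a b s r : ℝ} (ha : 0 ≤ a) (hb : 0 ≤ b) (hs : 0 < s) (hsr : s ≤ r) :
    ((a ^ s + b ^ s) / 2) ^ (r / s) ≤ (a ^ r + b ^ r) / 2 := by
  have h := (convexOn_rpow ((one_le_div hs).2 hsr)).2 (mem_Ici.2 (rpow_nonneg ha s))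
    (mem_Ici.2 (rpow_nonneg hb s)) one_half_pos.le one_half_pos.le (by norm_num)
  simp only [smul_eq_mul, ← rpow_mul ha, ← rpow_mul hb, mul_div_cancel₀ r hs.ne'] at h
  calc ((a ^ s + b ^ s) / 2) ^ (r / s) = (1 / 2 * a ^ s + 1 / 2 * b ^ s) ^ (r / s) := by ring_nf
    _ ≤ 1 / 2 * a ^ r + 1 / 2 * b ^ r := h
    _ = (a ^ r + b ^ r) / 2 := by ring

theorem heron_mean_le_rpow_mean {a b : ℝ} (ha : 0 < a) (hb : 0 < b) :
    (3 * a + 3 * b + 2 * √(a * b)) / 8 ≤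
      ((a ^ (3 / 4 : ℝ) + b ^ (3 / 4 : ℝ)) / 2) ^ (4 / 3 : ℝ) := by
  -- With `a = p ^ 4`, `b = q ^ 4` the claim is polynomial, and the difference of the two sides
  -- vanishes to order four at `p = q`.
  obtain ⟨p, hp, rfl⟩ : ∃ p : ℝ, 0 < p ∧ p ^ 4 = a :=
    ⟨a ^ (4⁻¹ : ℝ), by positivity, by simpa using rpow_inv_natCast_pow ha.le (n := 4) (by norm_num)⟩
  obtain ⟨q, hq, rfl⟩ : ∃ q : ℝ, 0 < q ∧ q ^ 4 = b :=
    ⟨b ^ (4⁻¹ : ℝ), by positivity, by simpa using rpow_inv_natCast_pow hb.le (n := 4) (by norm_num)⟩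
  have hpow {y : ℝ} (hy : 0 < y) : (y ^ 4) ^ (3 / 4 : ℝ) = y ^ 3 := by
    rw [← rpow_natCast y 4, ← rpow_natCast y 3, ← rpow_mul hy.le]; norm_num
  have hsqrt : √(p ^ 4 * q ^ 4) = p ^ 2 * q ^ 2 := by
    rw [show p ^ 4 * q ^ 4 = (p ^ 2 * q ^ 2) ^ 2 by ring, sqrt_sq (by positivity)]
  rw [hpow hp, hpow hq, hsqrt]
  refine le_of_pow_le_pow_left₀ three_ne_zero (by positivity) ?_
  have hcube : (((p ^ 3 + q ^ 3) / 2) ^ (4 / 3 : ℝ)) ^ 3 = ((p ^ 3 + q ^ 3) / 2) ^ 4 := by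
    rw [← rpow_natCast, ← rpow_natCast _ 4, ← rpow_mul (by positivity)]; norm_num
  have hfactor : 512 * (((p ^ 3 + q ^ 3) / 2) ^ 4 -
      ((3 * p ^ 4 + 3 * q ^ 4 + 2 * (p ^ 2 * q ^ 2)) / 8) ^ 3) =
      (p - q) ^ 4 * (p ^ 5 * q * (4 * p ^ 2 + (p - 2 * q) ^ 2) +
        p * q ^ 5 * (4 * q ^ 2 + (q - 2 * p) ^ 2) +
        (5 * p ^ 8 + 15 * p ^ 7 * q + 8 * p ^ 5 * q ^ 3 + 30 * p ^ 4 * q ^ 4 +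
          8 * p ^ 3 * q ^ 5 + 15 * p * q ^ 7 + 5 * q ^ 8)) := by ring
  rw [hcube, ← sub_nonneg]
  refine nonneg_of_mul_nonneg_right (hfactor ▸ ?_) (by norm_num : (0 : ℝ) < 512)
  have : 0 ≤ (p - q) ^ 4 := Even.pow_nonneg (by decide) _
  positivity

theorem one_add_sq_div_two_le_cosh (x : ℝ) : 1 + x ^ 2 / 2 ≤ cosh x := by
  have hsinh : (x / 2) ^ 2 ≤ sinh (x / 2) ^ 2 := by
    rw [sq_le_sq, abs_sinh]
    exact self_le_sinh_iff.2 (abs_nonneg _)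
  have hdouble := cosh_two_mul (x / 2)
  rw [cosh_sq, mul_div_cancel₀ _ two_ne_zero] at hdouble
  linarith

theorem two_mul_one_add_log_le_rpow_add_rpow {a b : ℝ} (ha : 0 < a) (hb : 0 < b) (s : ℝ) :
    2 * ((1 + s / 2 * log (a * b)) * (1 + s ^ 2 / 8 * log (a / b) ^ 2)) ≤ a ^ s + b ^ s := by
  have hsum : a ^ s + b ^ s = 2 * (exp (s / 2 * log (a * b)) * cosh (s / 2 * log (a / b))) := by
    rw [log_mul ha.ne' hb.ne', log_div ha.ne' hb.ne', rpow_def_of_pos ha, rpow_def_of_pos hb,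
      cosh_eq, mul_div_assoc', mul_add, ← exp_add, ← exp_add]
    ring_nf
  have hcosh := one_add_sq_div_two_le_cosh (s / 2 * log (a / b))
  have hexp := add_one_le_exp (s / 2 * log (a * b))
  rw [hsum]
  gcongr
  · linarith
  · linarith

theorem two_lt_rpow_add_rpow_of_le {a b s r : ℝ} (ha : 0 ≤ a) (hb : 0 ≤ b) (hs : 0 < s)
    (hsr : s ≤ r) (h : 2 < a ^ s + b ^ s) : 2 < a ^ r + b ^ r := by
  have hmean : 1 < ((a ^ s + b ^ s) / 2) ^ (r / s) :=
    one_lt_rpow (by linarith) (div_pos (hs.trans_le hsr) hs)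
  linarith [rpow_mean_le_of_le ha hb hs hsr]

theorem two_le_rpow_add_rpow_of_le {a b s r : ℝ} (ha : 0 ≤ a) (hb : 0 ≤ b) (hs : 0 < s)
    (hsr : s ≤ r) (h : 2 ≤ a ^ s + b ^ s) : 2 ≤ a ^ r + b ^ r := by
  have hmean : 1 ≤ ((a ^ s + b ^ s) / 2) ^ (r / s) :=
    one_le_rpow (by linarith) (div_pos (hs.trans_le hsr) hs).le
  linarith [rpow_mean_le_of_le ha hb hs hsr]

theorem two_mul_mul_rpow_le_rpow_add_rpow {a b : ℝ} (ha : 0 < a) (hb : 0 < b) (s : ℝ) :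
    2 * (a * b) ^ (s / 2) ≤ a ^ s + b ^ s := by
  have hsq {y : ℝ} (hy : 0 < y) : y ^ s = (y ^ (s / 2)) ^ 2 := by
    rw [← rpow_mul_natCast hy.le]; norm_num
  rw [mul_rpow ha.le hb.le, hsq ha, hsq hb, ← mul_assoc]
  exact two_mul_le_add_sq _ _

theorem two_lt_rpow_add_rpow_of_neg {a b s r : ℝ} (ha : 0 < a) (hb : 0 < b) (hr : 0 < r)
    (h : a ^ r + b ^ r < 2) (hs : s < 0) : 2 < a ^ s + b ^ s := by
  have hab : a * b < 1 := by
    by_contra! hab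
    linarith [two_mul_mul_rpow_le_rpow_add_rpow ha hb r, one_le_rpow hab (half_pos hr).le]
  linarith [two_mul_mul_rpow_le_rpow_add_rpow ha hb s,
    one_lt_rpow_of_pos_of_lt_one_of_neg (mul_pos ha hb) hab (by linarith : s / 2 < 0)]

/-- The two powers in Wilker's inequality with the sign of the exponent reversed,
`(x / sin x) ^ (2 * s) + (x / tan x) ^ s`, where `(x / sin x) ^ 2` is written as
`x ^ 2 + (x * cot x) ^ 2` so that only `x` and `x * cot x` enter. -/
noncomputable def wilkerSum (s x : ℝ) : ℝ := (x ^ 2 + (x * cot x) ^ 2) ^ s + (x * cot x) ^ s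

theorem mul_cot_pos {x : ℝ} (hx : x ∈ Ioo 0 (π / 2)) : 0 < x * cot x := by
  rw [cot_eq_cos_div_sin]
  exact mul_pos hx.1 (div_pos (cos_pos_of_mem_Ioo ⟨by linarith [hx.1, hx.2], hx.2⟩)
    (sin_pos_of_pos_of_lt_pi hx.1 (by linarith [hx.1, hx.2])))

theorem wilkerSum_neg {x : ℝ} (hx : x ∈ Ioo 0 (π / 2)) (p : ℝ) :
    wilkerSum (-p) x = (sin x / x) ^ (2 * p) + (tan x / x) ^ p := by
  have hx₀ := hx.1
  have hsin : 0 < sin x := sin_pos_of_pos_of_lt_pi hx₀ (by linarith [hx.2])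
  have hsq : x ^ 2 + (x * cot x) ^ 2 = ((sin x / x) ^ 2)⁻¹ := by
    rw [cot_eq_cos_div_sin]
    field_simp
    linarith [sin_sq_add_cos_sq x]
  have htan : x * cot x = (tan x / x)⁻¹ := by
    rw [cot_eq_cos_div_sin, tan_eq_sin_div_cos]
    field_simp
  have htan₀ : 0 ≤ tan x / x := by
    rw [← inv_inv (tan x / x), ← htan]
    exact (inv_pos.2 (mul_cot_pos hx)).le
  rw [wilkerSum, hsq, htan, rpow_neg (by positivity), rpow_neg (by positivity),
    inv_rpow (by positivity), inv_rpow htan₀, inv_inv, inv_inv, rpow_mul (by positivity), rpow_two]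

theorem quadratic_mean_mulCotUpper_lt_one {t : ℝ} (ht₀ : 0 < t) (ht : t ≤ 5 / 2) :
    3 / 20 * ((t + mulCotUpper t ^ 2) ^ 2 + mulCotUpper t ^ 2) +
      7 / 10 * ((t + mulCotUpper t ^ 2) * mulCotUpper t) < 1 := by
  -- The gap is `t ^ 3 * (11 / 5400 + t / 2250 + 7 * t ^ 2 / 45000 - ⋯)`, all later terms being
  -- negative.
  have hpow (k : ℕ) : t ^ 3 * t ^ k ≤ t ^ 3 * (5 / 2) ^ k := by gcongr
  rw [mulCotUpper]
  linarith [pow_pos ht₀ 3, pow_pos ht₀ 4, pow_pos ht₀ 5, hpow 3, hpow 4, hpow 5, hpow 6, hpow 7,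
    hpow 8, hpow 9]

theorem wilkerSum_three_fifths_lt_two {x : ℝ} (hx : x ∈ Ioo 0 (π / 2)) :
    wilkerSum (3 / 5) x < 2 := by
  have hb := mul_cot_pos hx
  have hb_lt := mul_cot_lt_mulCotUpper hx.1 hx.2
  have hquad := quadratic_mean_mulCotUpper_lt_one (pow_pos hx.1 2)
    (by nlinarith [hx.1, hx.2, pi_lt_d4])
  have hmean := rpow_mean_le_quadratic (a := x ^ 2 + (x * cot x) ^ 2) (s := 3 / 5)
    (by positivity) hb (by norm_num) (by norm_num)
  by_contra! hge
  refine lt_irrefl (1 : ℝ) ?_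
  calc 1 ≤ (wilkerSum (3 / 5) x / 2) ^ (2 / (3 / 5) : ℝ) :=
        one_le_rpow ((one_le_div two_pos).2 hge) (by norm_num)
    _ ≤ 3 / 20 * ((x ^ 2 + (x * cot x) ^ 2) ^ 2 + (x * cot x) ^ 2) +
          7 / 10 * ((x ^ 2 + (x * cot x) ^ 2) * (x * cot x)) := by rw [wilkerSum]; linarith
    _ ≤ 3 / 20 * ((x ^ 2 + mulCotUpper (x ^ 2) ^ 2) ^ 2 + mulCotUpper (x ^ 2) ^ 2) +
          7 / 10 * ((x ^ 2 + mulCotUpper (x ^ 2) ^ 2) * mulCotUpper (x ^ 2)) := by gcongr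
    _ < 1 := hquad

theorem one_lt_heron_mean_mulCotLower {t : ℝ} (ht₀ : 0 < t) (ht : t ≤ 9 / 4) :
    1 < (3 * (t + mulCotLower t ^ 2) + 3 * mulCotLower t +
      2 * √((t + mulCotLower t ^ 2) * mulCotLower t)) / 8 := by
  have hpow (k : ℕ) : t ^ 2 * t ^ k ≤ t ^ 2 * (9 / 4) ^ k := by gcongr
  -- The gap is `t ^ 2 * (1 / 15 - 17 * t / 2160 + 7 * t ^ 2 / 14400 - ⋯)`, all later terms being
  -- negative.
  have hsq : ((8 - 3 * (t + mulCotLower t ^ 2) - 3 * mulCotLower t) / 2) ^ 2 <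
      (t + mulCotLower t ^ 2) * mulCotLower t := by
    rw [mulCotLower]
    linarith [pow_pos ht₀ 2, pow_pos ht₀ 4, hpow 1, hpow 3, hpow 4, hpow 5, hpow 6, hpow 7,
      hpow 8, hpow 9, hpow 10]
  linarith [lt_sqrt_of_sq_lt hsq]

theorem two_lt_wilkerSum_three_fourths {x : ℝ} (hx₀ : 0 < x) (hx : x ≤ 3 / 2) :
    2 < wilkerSum (3 / 4) x := by
  have hx₂ : x ^ 2 ≤ 9 / 4 := by nlinarith
  have hb := mul_cot_pos ⟨hx₀, by linarith [pi_gt_d2]⟩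
  have hb_gt := mulCotLower_lt_mul_cot hx₀ hx
  have hlower := mulCotLower_pos (sq_nonneg x) hx₂
  by_contra! hle
  refine lt_irrefl (1 : ℝ) ?_
  calc 1 < (3 * (x ^ 2 + mulCotLower (x ^ 2) ^ 2) + 3 * mulCotLower (x ^ 2) +
          2 * √((x ^ 2 + mulCotLower (x ^ 2) ^ 2) * mulCotLower (x ^ 2))) / 8 :=
        one_lt_heron_mean_mulCotLower (by positivity) hx₂
    _ ≤ (3 * (x ^ 2 + (x * cot x) ^ 2) + 3 * (x * cot x) +
          2 * √((x ^ 2 + (x * cot x) ^ 2) * (x * cot x))) / 8 := by gcongr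
    _ ≤ (wilkerSum (3 / 4) x / 2) ^ (4 / 3 : ℝ) := heron_mean_le_rpow_mean (by positivity) hb
    _ ≤ 1 := by
        refine rpow_le_one ?_ ((div_le_one two_pos).2 hle) (by norm_num)
        rw [wilkerSum]
        positivity

/-- The exponent `s` with `(π / 2) ^ (2 * s) = 2`, for which `wilkerSum s` tends to `2` at
`π / 2`. -/
noncomputable def wilkerExponent : ℝ := log 2 / (2 * (log π - log 2))

theorem pi_div_two_rpow_two_mul_wilkerExponent : (π / 2) ^ (2 * wilkerExponent) = 2 := by
  have hlog : 0 < log (π / 2) := log_pos (by linarith [pi_gt_three])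
  rw [wilkerExponent, ← log_div pi_ne_zero two_ne_zero, rpow_def_of_pos (by positivity)]
  field_simp
  exact exp_log two_pos

theorem lt_wilkerExponent_iff {s : ℝ} : s < wilkerExponent ↔ (π / 2) ^ (2 * s) < 2 := by
  have h : (π / 2) ^ (2 * s) < (π / 2) ^ (2 * wilkerExponent) ↔ 2 * s < 2 * wilkerExponent :=
    rpow_lt_rpow_left_iff (by linarith [pi_gt_three])
  rwa [pi_div_two_rpow_two_mul_wilkerExponent, mul_lt_mul_iff_right₀ two_pos, iff_comm] at h

theorem wilkerExponent_lt_iff {s : ℝ} : wilkerExponent < s ↔ 2 < (π / 2) ^ (2 * s) := by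
  have h : (π / 2) ^ (2 * wilkerExponent) < (π / 2) ^ (2 * s) ↔ 2 * wilkerExponent < 2 * s :=
    rpow_lt_rpow_left_iff (by linarith [pi_gt_three])
  rwa [pi_div_two_rpow_two_mul_wilkerExponent, mul_lt_mul_iff_right₀ two_pos, iff_comm] at h

theorem three_fourths_lt_wilkerExponent : 3 / 4 < wilkerExponent := by
  rw [lt_wilkerExponent_iff]
  refine lt_of_pow_lt_pow_left₀ 2 zero_le_two ?_
  calc ((π / 2) ^ (2 * (3 / 4) : ℝ)) ^ 2 = (π / 2) ^ 3 := by
        rw [← rpow_mul_natCast (by positivity), ← rpow_natCast]; norm_num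
    _ < (3.15 / 2) ^ 3 := by gcongr; exact pi_lt_d2
    _ < 2 ^ 2 := by norm_num

theorem wilkerExponent_lt_four_fifths : wilkerExponent < 4 / 5 := by
  rw [wilkerExponent_lt_iff]
  refine lt_of_pow_lt_pow_left₀ 5 (by positivity) ?_
  calc (2 : ℝ) ^ 5 < (3.14 / 2) ^ 8 := by norm_num
    _ < (π / 2) ^ 8 := by gcongr; exact pi_gt_d2
    _ = ((π / 2) ^ (2 * (4 / 5) : ℝ)) ^ 5 := by
        rw [← rpow_mul_natCast (by positivity), ← rpow_natCast]; norm_num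

theorem mul_pi_div_two_sub_le_mul_cot {x : ℝ} (hx : x ∈ Ioo 0 (π / 2)) :
    x * (π / 2 - x) ≤ x * cot x := by
  have htan := le_tan (x := π / 2 - x) (by linarith [hx.2]) (by linarith [hx.1])
  rw [tan_pi_div_two_sub, tan_eq_sin_div_cos, inv_div, ← cot_eq_cos_div_sin] at htan
  exact mul_le_mul_of_nonneg_left htan hx.1.le

theorem two_sub_le_sq_rpow_wilkerExponent {x : ℝ} (hx : x ∈ Ioo 0 (π / 2)) :
    2 - 21 / 10 * (π / 2 - x) ≤ (x ^ 2) ^ wilkerExponent := by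
  have hs₀ := three_fourths_lt_wilkerExponent
  have hs := wilkerExponent_lt_four_fifths
  have hx₀ := hx.1
  have hπ : 2 * x / π = 1 + -(2 / π * (π / 2 - x)) := by field_simp; ring
  have hslope : 8 / π * wilkerExponent ≤ 21 / 10 := by
    rw [div_mul_eq_mul_div, div_le_iff₀ pi_pos]
    linarith [pi_gt_d2]
  calc 2 - 21 / 10 * (π / 2 - x) ≤ 2 - 8 / π * wilkerExponent * (π / 2 - x) := by
        gcongr; linarith [hx.2]
    _ = 2 * (1 + 2 * wilkerExponent * -(2 / π * (π / 2 - x))) := by ring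
    _ ≤ 2 * (2 * x / π) ^ (2 * wilkerExponent) := by
        rw [hπ]
        gcongr
        refine one_add_mul_self_le_rpow_one_add ?_ (by linarith)
        linarith [show 0 < 2 * x / π by positivity]
    _ = (π / 2 * (2 * x / π)) ^ (2 * wilkerExponent) := by
        rw [mul_rpow (by positivity) (by positivity), pi_div_two_rpow_two_mul_wilkerExponent]
    _ = (x ^ 2) ^ wilkerExponent := by
        rw [show π / 2 * (2 * x / π) = x by field_simp, rpow_mul hx₀.le, rpow_two]

theorem lt_mul_cot_rpow_wilkerExponent {x : ℝ} (hx : x ∈ Ioo (3 / 2) (π / 2)) :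
    21 / 10 * (π / 2 - x) < (x * cot x) ^ wilkerExponent := by
  have hs₀ := three_fourths_lt_wilkerExponent
  obtain ⟨δ, hδ⟩ : ∃ δ, δ = π / 2 - x := ⟨_, rfl⟩
  have hδ₀ : 0 < δ := by linarith [hx.2]
  have hδ₁ : δ < 1 / 10 := by linarith [hx.1, pi_lt_d2]
  rw [← hδ]
  calc 21 / 10 * δ < (3 / 2 * δ) ^ (4 / 5 : ℝ) := by
        refine lt_of_pow_lt_pow_left₀ 5 (by positivity) ?_
        calc (21 / 10 * δ) ^ 5 = (21 / 10) ^ 5 * δ ^ 4 * δ := by ring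
          _ < (21 / 10) ^ 5 * δ ^ 4 * (1 / 10) := by gcongr
          _ ≤ (3 / 2 * δ) ^ 4 := by rw [mul_pow]; linarith [pow_pos hδ₀ 4]
          _ = ((3 / 2 * δ) ^ (4 / 5 : ℝ)) ^ 5 := by
            rw [← rpow_mul_natCast (by positivity), ← rpow_natCast]; norm_num
    _ ≤ (3 / 2 * δ) ^ wilkerExponent :=
        rpow_le_rpow_of_exponent_ge (by positivity) (by linarith) wilkerExponent_lt_four_fifths.le
    _ ≤ (x * cot x) ^ wilkerExponent := by
        refine rpow_le_rpow (by positivity) ?_ (by linarith)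
        calc 3 / 2 * δ ≤ x * δ := by gcongr; exact hx.1.le
          _ ≤ x * cot x := hδ ▸ mul_pi_div_two_sub_le_mul_cot ⟨by linarith [hx.1], hx.2⟩

theorem two_lt_wilkerSum_wilkerExponent {x : ℝ} (hx : x ∈ Ioo (3 / 2) (π / 2)) :
    2 < wilkerSum wilkerExponent x := by
  have hs₀ := three_fourths_lt_wilkerExponent
  calc 2 < (x ^ 2) ^ wilkerExponent + (x * cot x) ^ wilkerExponent := by
        linarith [two_sub_le_sq_rpow_wilkerExponent ⟨by linarith [hx.1], hx.2⟩,
          lt_mul_cot_rpow_wilkerExponent hx]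
    _ ≤ wilkerSum wilkerExponent x := by
        unfold wilkerSum
        gcongr
        exact le_add_of_nonneg_right (sq_nonneg _)

theorem two_lt_wilkerSum_of_wilkerExponent_le {s x : ℝ} (hs : wilkerExponent ≤ s)
    (hx : x ∈ Ioo 0 (π / 2)) : 2 < wilkerSum s x := by
  have hs₀ := three_fourths_lt_wilkerExponent
  have hb := mul_cot_pos hx
  have ha : 0 ≤ x ^ 2 + (x * cot x) ^ 2 := by positivity
  rcases le_or_gt x (3 / 2) with hx₁ | hx₁
  · exact two_lt_rpow_add_rpow_of_le ha hb.le (by norm_num) (hs₀.le.trans hs)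
      (two_lt_wilkerSum_three_fourths hx.1 hx₁)
  · exact two_lt_rpow_add_rpow_of_le ha hb.le (by linarith) hs
      (two_lt_wilkerSum_wilkerExponent ⟨hx₁, hx.2⟩)

theorem exists_wilkerSum_le_two {s : ℝ} (hs₀ : 0 ≤ s) (hs : s < wilkerExponent) :
    ∃ x ∈ Ioo 0 (π / 2), wilkerSum s x ≤ 2 := by
  rcases hs₀.eq_or_lt with rfl | hs₀
  · exact ⟨π / 4, ⟨by positivity, by linarith [pi_pos]⟩, by norm_num [wilkerSum]⟩
  have hvalue : wilkerSum s (π / 2) < 2 := by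
    rw [wilkerSum, cot_eq_cos_div_sin, cos_pi_div_two, zero_div, mul_zero, zero_rpow hs₀.ne',
      zero_pow two_ne_zero, add_zero, add_zero, ← rpow_two, ← rpow_mul (by positivity)]
    exact lt_wilkerExponent_iff.1 hs
  have hcont : ContinuousAt (wilkerSum s) (π / 2) := by
    unfold wilkerSum
    simp only [cot_eq_cos_div_sin]
    have hsin : sin (π / 2) ≠ 0 := by simp
    fun_prop (disch := first | assumption | positivity)
  have hev : ∀ᶠ x in 𝓝[<] (π / 2), wilkerSum s x < 2 :=
    (hcont.eventually_lt_const hvalue).filter_mono nhdsWithin_le_nhds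
  obtain ⟨x, hx, hxI⟩ := (hev.and (Ioo_mem_nhdsLT (by positivity : 0 < π / 2))).exists
  exact ⟨x, hxI, hx.le⟩

theorem one_le_mul_mulCotLower {t : ℝ} (ht₀ : 0 < t) (ht : t ≤ 1 / 4) :
    1 ≤ (1 + (t ^ 2 / 15 + t ^ 3)) * ((t + mulCotLower t ^ 2) * mulCotLower t) := by
  have hpow (k : ℕ) : t ^ 3 * t ^ k ≤ t ^ 3 :=
    mul_le_of_le_one_right (by positivity) (pow_le_one₀ ht₀.le (by linarith))
  calc 1 ≤ (1 + (t ^ 2 / 15 + t ^ 3)) * (1 - t ^ 2 / 15 - t ^ 3 / 30) := by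
        linarith [hpow 1, hpow 2, hpow 3, pow_pos ht₀ 3]
    _ ≤ (1 + (t ^ 2 / 15 + t ^ 3)) * ((t + mulCotLower t ^ 2) * mulCotLower t) := by
        gcongr
        rw [mulCotLower]
        linarith [hpow 1, hpow 2, hpow 3, hpow 4, hpow 5, hpow 6, pow_pos ht₀ 3]

theorem neg_le_log_mul_mul_cot {x : ℝ} (hx₀ : 0 < x) (hx : x ≤ 1 / 2) :
    -(x ^ 4 / 15 + x ^ 6) ≤ log ((x ^ 2 + (x * cot x) ^ 2) * (x * cot x)) := by
  have hx₂ : x ^ 2 ≤ 1 / 4 := by nlinarith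
  have hb := mul_cot_pos ⟨hx₀, by linarith [pi_gt_three]⟩
  have hb_gt := mulCotLower_lt_mul_cot hx₀ (by linarith)
  have hlower := mulCotLower_pos (sq_nonneg x) (by linarith)
  have hinv : ((x ^ 2 + (x * cot x) ^ 2) * (x * cot x))⁻¹ ≤ 1 + (x ^ 4 / 15 + x ^ 6) := by
    rw [inv_le_iff_one_le_mul₀ (by positivity)]
    calc 1 ≤ (1 + ((x ^ 2) ^ 2 / 15 + (x ^ 2) ^ 3)) *
            ((x ^ 2 + mulCotLower (x ^ 2) ^ 2) * mulCotLower (x ^ 2)) :=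
          one_le_mul_mulCotLower (by positivity) hx₂
      _ = (1 + (x ^ 4 / 15 + x ^ 6)) *
            ((x ^ 2 + mulCotLower (x ^ 2) ^ 2) * mulCotLower (x ^ 2)) := by ring
      _ ≤ (1 + (x ^ 4 / 15 + x ^ 6)) * ((x ^ 2 + (x * cot x) ^ 2) * (x * cot x)) := by gcongr
  linarith [one_sub_inv_le_log_of_pos
    (show 0 < (x ^ 2 + (x * cot x) ^ 2) * (x * cot x) by positivity)]

theorem le_log_div_mul_cot {x : ℝ} (hx₀ : 0 < x) (hx : x ≤ 1 / 2) :
    2 / 3 * x ^ 2 - x ^ 4 ≤ log ((x ^ 2 + (x * cot x) ^ 2) / (x * cot x)) := by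
  have hxI : x ∈ Ioo 0 (π / 2) := ⟨hx₀, by linarith [pi_gt_three]⟩
  have hb := mul_cot_pos hxI
  have hb_gt := mulCotLower_lt_mul_cot hx₀ (by linarith)
  have hb_lt := mul_cot_lt_mulCotUpper hx₀ hxI.2
  rw [mulCotLower] at hb_gt
  rw [mulCotUpper] at hb_lt
  have hx₂ : x ^ 2 ≤ 1 / 4 := by nlinarith
  set b := x * cot x
  have hb_one : b < 1 := by linarith [pow_pos hx₀ 2, pow_pos hx₀ 4, pow_pos hx₀ 6]
  have hcoef : 0 ≤ x ^ 2 * (2 / 3 - x ^ 2) := mul_nonneg (sq_nonneg x) (by linarith)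
  have hle : x ^ 2 * (2 / 3 - x ^ 2) * (x ^ 2 + b ^ 2) ≤ x ^ 2 * (2 / 3 - x ^ 2) * (x ^ 2 + 1) := by
    gcongr
    exact pow_le_one₀ hb.le hb_one.le
  have hsub : b - b ^ 2 ≤ 1 - b := by linarith [sq_nonneg (1 - b)]
  refine le_trans ?_ (one_sub_inv_le_log_of_pos (by positivity))
  rw [inv_div, le_sub_comm, div_le_iff₀ (by positivity)]
  linarith [pow_pos hx₀ 4, pow_pos hx₀ 6]

theorem exists_one_le_mul_of_three_fifths_lt {s : ℝ} (hs : 3 / 5 < s) :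
    ∃ x ∈ Ioc 0 (1 / 2), 1 ≤ (1 + s / 2 * -(x ^ 4 / 15 + x ^ 6)) *
      (1 + s ^ 2 / 8 * (2 / 3 * x ^ 2 - x ^ 4) ^ 2) := by
  let gain (x : ℝ) : ℝ := s ^ 2 / 8 * (2 / 3 - x ^ 2) ^ 2 -
    s / 2 * (1 / 15 + x ^ 2) * (1 + s ^ 2 / 8 * (2 / 3 * x ^ 2 - x ^ 4) ^ 2)
  have hgain₀ : 0 < gain 0 := by
    have : gain 0 = s / 18 * (s - 3 / 5) := by simp only [gain]; ring
    rw [this]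
    exact mul_pos (by linarith) (by linarith)
  have hgain : Continuous gain := by fun_prop
  have hev : ∀ᶠ x in 𝓝[>] 0, 0 < gain x :=
    (hgain.continuousAt.eventually_const_lt hgain₀).filter_mono nhdsWithin_le_nhds
  obtain ⟨x, hx, hxI⟩ := (hev.and (Ioc_mem_nhdsGT one_half_pos)).exists
  refine ⟨x, hxI, ?_⟩
  calc 1 ≤ 1 + x ^ 4 * gain x := le_add_of_nonneg_right (by positivity)
    _ = _ := by simp only [gain]; ring

theorem exists_two_le_wilkerSum {s : ℝ} (hs : 3 / 5 < s) :
    ∃ x ∈ Ioo 0 (π / 2), 2 ≤ wilkerSum s x := by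
  obtain ⟨x, ⟨hx₀, hx⟩, hone⟩ := exists_one_le_mul_of_three_fifths_lt hs
  have hxI : x ∈ Ioo 0 (π / 2) := ⟨hx₀, by linarith [pi_gt_three]⟩
  have hb := mul_cot_pos hxI
  have hlog_mul := neg_le_log_mul_mul_cot hx₀ hx
  have hlog_div : (2 / 3 * x ^ 2 - x ^ 4) ^ 2 ≤
      log ((x ^ 2 + (x * cot x) ^ 2) / (x * cot x)) ^ 2 := by
    have hx₂ : 0 ≤ x ^ 2 * (2 / 3 - x ^ 2) := mul_nonneg (sq_nonneg x) (by nlinarith)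
    exact pow_le_pow_left₀ (by linarith) (le_log_div_mul_cot hx₀ hx) 2
  have hfst : 0 ≤ 1 + s / 2 * -(x ^ 4 / 15 + x ^ 6) :=
    (pos_of_mul_pos_left (one_pos.trans_le hone) (by positivity)).le
  have hfst_le : 1 + s / 2 * -(x ^ 4 / 15 + x ^ 6) ≤
      1 + s / 2 * log ((x ^ 2 + (x * cot x) ^ 2) * (x * cot x)) := by gcongr
  refine ⟨x, hxI, ?_⟩
  calc 2 ≤ 2 * ((1 + s / 2 * -(x ^ 4 / 15 + x ^ 6)) *
          (1 + s ^ 2 / 8 * (2 / 3 * x ^ 2 - x ^ 4) ^ 2)) := by linarith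
    _ ≤ 2 * ((1 + s / 2 * log ((x ^ 2 + (x * cot x) ^ 2) * (x * cot x))) *
          (1 + s ^ 2 / 8 * log ((x ^ 2 + (x * cot x) ^ 2) / (x * cot x)) ^ 2)) := by
        have hfst' := hfst.trans hfst_le
        gcongr
    _ ≤ wilkerSum s x := two_mul_one_add_log_le_rpow_add_rpow (by positivity) hb s

theorem two_lt_wilkerSum_of_neg {s x : ℝ} (hs : s < 0) (hx : x ∈ Ioo 0 (π / 2)) :
    2 < wilkerSum s x := by
  have hb := mul_cot_pos hx
  exact two_lt_rpow_add_rpow_of_neg (by positivity) hb (by norm_num)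
    (wilkerSum_three_fifths_lt_two hx) hs

theorem wilkerSum_lt_two {s x : ℝ} (hs₀ : 0 < s) (hs : s ≤ 3 / 5) (hx : x ∈ Ioo 0 (π / 2)) :
    wilkerSum s x < 2 := by
  have hb := mul_cot_pos hx
  refine lt_of_not_ge fun hge ↦ (wilkerSum_three_fifths_lt_two hx).not_ge ?_
  exact two_le_rpow_add_rpow_of_le (by positivity) hb.le hs₀ hs hge

theorem forall_two_lt_wilkerSum_iff {s : ℝ} :
    (∀ x ∈ Ioo 0 (π / 2), 2 < wilkerSum s x) ↔ s < 0 ∨ wilkerExponent ≤ s := by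
  refine ⟨fun h ↦ ?_, fun hs x hx ↦ hs.elim (two_lt_wilkerSum_of_neg · hx)
    (two_lt_wilkerSum_of_wilkerExponent_le · hx)⟩
  by_contra! hs
  obtain ⟨x, hx, hle⟩ := exists_wilkerSum_le_two hs.1 hs.2
  exact hle.not_gt (h x hx)

theorem forall_wilkerSum_lt_two_iff {s : ℝ} :
    (∀ x ∈ Ioo 0 (π / 2), wilkerSum s x < 2) ↔ 0 < s ∧ s ≤ 3 / 5 := by
  refine ⟨fun h ↦ ⟨?_, ?_⟩, fun hs x ↦ wilkerSum_lt_two hs.1 hs.2⟩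
  · by_contra! hs
    have hx : π / 4 ∈ Ioo 0 (π / 2) := ⟨by positivity, by linarith [pi_pos]⟩
    rcases hs.eq_or_lt with rfl | hs
    · exact (h _ hx).ne (by norm_num [wilkerSum])
    · exact (h _ hx).not_gt (two_lt_wilkerSum_of_neg hs hx)
  · by_contra! hs
    obtain ⟨x, hx, hle⟩ := exists_two_le_wilkerSum hs
    exact hle.not_gt (h x hx)

theorem wilker_zhu_trig (p q : ℝ) (hp : p ≠ 0) (hq : q ≠ 0) :
    ((∀ x ∈ Ioo (0 : ℝ) (π / 2),
        (sin x / x) ^ (2 * p) + (tan x / x) ^ p > 2) ↔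
      (0 < p ∨ p ≤ -(Real.log 2 / (2 * (Real.log π - Real.log 2))))) ∧
    ((∀ x ∈ Ioo (0 : ℝ) (π / 2),
        (sin x / x) ^ (2 * q) + (tan x / x) ^ q < 2) ↔
      (-(3 / 5) ≤ q ∧ q < 0)) := by
  have two_lt_iff := forall_two_lt_wilkerSum_iff (s := -p)
  have lt_two_iff := forall_wilkerSum_lt_two_iff (s := -q)
  simp +contextual only [wilkerSum_neg] at two_lt_iff lt_two_iff
  refine ⟨two_lt_iff.trans ?_, lt_two_iff.trans ?_⟩
  · rw [neg_lt_zero, le_neg, wilkerExponent]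
  · rw [neg_pos, neg_le, and_comm]
end
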